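/- arXiv:2403.18744 — 8 statements merged into one kernel-verified Lean document; each statement's English description precedes it below -/
import Mathlib

section
/- Let E be a real Hilbert space, β > 0, and let f : E → ℝ ∪ {+∞} be proper, convex and lower semicontinuous. Then f is (finite-valued and) Fréchet differentiable on E with β-Lipschitz continuous gradient if and only if its Fenchel conjugate f* is (1/β)-strongly convex. In this case, f* is also coercive. -/
open scoped Classical
open scoped RealInnerProductSpace

noncomputable section

variable {E : Type*} [NormedAddCommGroup E] [InnerProductSpace ℝ E]

/-- A function with values in `ℝ ∪ {+∞}` (modelled inside `EReal`) is proper if it never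
takes the value `-∞` and is not identically `+∞`. -/
def EProper {V : Type*} (f : V → EReal) : Prop := (∀ x, f x ≠ ⊥) ∧ (∃ x, f x ≠ ⊤)

/-- Convexity for extended-real-valued functions. -/
def EConvexOn {V : Type*} [AddCommMonoid V] [Module ℝ V] (f : V → EReal) : Prop :=
  ∀ x y : V, ∀ a b : ℝ, 0 < a → 0 < b → a + b = 1 →
    f (a • x + b • y) ≤ (a : EReal) * f x + (b : EReal) * f y

/-- The Fenchel (Legendre) conjugate `f*(μ) = sup_x (⟨μ, x⟩ - f x)`. -/
def fenchel (f : E → EReal) (μ : E) : EReal := ⨆ x : E, (⟪μ, x⟫ : EReal) - f x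

/-- `μ` is a subgradient of `f` at `x`: `f y ≥ f x + ⟨μ, y - x⟩` for all `y`. -/
def ESubgradAt (f : E → EReal) (x μ : E) : Prop :=
  ∀ y : E, f x + (⟪μ, y - x⟫ : EReal) ≤ f y

/-- The support function `σ_C(μ) = sup_{x ∈ C} ⟨μ, x⟩` of a set `C`. -/
def supportFn (C : Set E) (μ : E) : EReal := ⨆ x : C, ((⟪μ, (x : E)⟫ : ℝ) : EReal)

/-- `Ξ` is `β`-strongly convex: `Ξ - (β/2)‖·‖²` is convex. -/
def StronglyConvexE (β : ℝ) (Ξ : E → EReal) : Prop :=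
  EConvexOn (fun x => Ξ x - ((β / 2 * ‖x‖ ^ 2 : ℝ) : EReal))

/-- The Bregman distance associated with `Ξ`:
`B_Ξ(μ, (μ', w)) = Ξ(μ) - Ξ(μ') - ⟨μ - μ', w⟩` if `w ∈ ∂Ξ(μ')`, and `+∞` otherwise. -/
def bregman (Ξ : E → EReal) (μ μ' w : E) : EReal :=
  if ESubgradAt Ξ μ' w then Ξ μ - Ξ μ' - ((⟪μ - μ', w⟫ : ℝ) : EReal) else ⊤

/-- Coercivity for extended-real-valued functions: `f x → +∞` as `‖x‖ → +∞`. -/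
def ECoercive {V : Type*} [NormedAddCommGroup V] (f : V → EReal) : Prop :=
  ∀ M : ℝ, ∃ R : ℝ, ∀ x : V, R ≤ ‖x‖ → (M : EReal) ≤ f x

lemma hlp_norm_comb (μ ν : E) (a b : ℝ) (hab : a + b = 1) :
    ‖a • μ + b • ν‖ ^ 2 = a * ‖μ‖ ^ 2 + b * ‖ν‖ ^ 2 - a * b * ‖μ - ν‖ ^ 2 := by
  rw [norm_add_sq_real, norm_sub_sq_real, norm_smul, norm_smul, inner_smul_left, inner_smul_right]
  simp only [mul_pow, Real.norm_eq_abs, sq_abs, conj_trivial]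
  obtain rfl : b = 1 - a := by linarith
  ring

lemma hlp_sc_iff (φ : E → EReal) (hφ : ∀ x, φ x ≠ ⊥) (α : ℝ) :
    StronglyConvexE α φ ↔ ∀ (μ ν : E) (c d a b : ℝ), 0 < a → 0 < b → a + b = 1 →
      φ μ ≤ c → φ ν ≤ d →
      φ (a • μ + b • ν) ≤ ((a * c + b * d - a * b * (α / 2) * ‖μ - ν‖ ^ 2 : ℝ) : EReal) := by
  constructor
  · intro h μ ν c d a b ha hb hab hc hd
    have h1 := h μ ν a b ha hb hab
    simp only at h1
    have hμt : φ μ ≠ ⊤ := fun h => by simp [h] at hc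
    have hνt : φ ν ≠ ⊤ := fun h => by simp [h] at hd
    lift φ μ to ℝ using ⟨hμt, hφ μ⟩ with p
    lift φ ν to ℝ using ⟨hνt, hφ ν⟩ with q
    rw [hlp_norm_comb μ ν a b hab] at h1
    have hx := hφ (a • μ + b • ν)
    norm_cast at h1 hc hd
    have hxt : φ (a • μ + b • ν) ≠ ⊤ := fun h => by
      rw [h, EReal.top_sub_coe] at h1; exact EReal.coe_ne_top _ (top_le_iff.1 h1)
    lift φ (a • μ + b • ν) to ℝ using ⟨hxt, hx⟩ with r
    norm_cast at h1 ⊢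
    nlinarith
  · intro h μ ν a b ha hb hab
    simp only
    have hbot : ∀ (x : E) (r : ℝ), φ x - (r : EReal) ≠ ⊥ := by
      intro x r
      have := hφ x
      by_cases ht : φ x = ⊤
      · rw [ht, EReal.top_sub_coe]; simp
      · lift φ x to ℝ using ⟨ht, this⟩ with p
        norm_cast; exact EReal.coe_ne_bot _
    have hmul : ∀ (x : E) (r t : ℝ), 0 < t → (t : EReal) * (φ x - (r : EReal)) ≠ ⊥ := by
      intro x r t htp
      have := hφ x
      by_cases ht : φ x = ⊤
      · rw [ht, EReal.top_sub_coe, EReal.coe_mul_top_of_pos htp]; simp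
      · lift φ x to ℝ using ⟨ht, this⟩ with p
        norm_cast; exact EReal.coe_ne_bot _
    by_cases hμt : φ μ = ⊤
    · rw [hμt, EReal.top_sub_coe, EReal.coe_mul_top_of_pos ha, EReal.top_add_of_ne_bot (hmul _ _ _ hb)]
      exact le_top
    by_cases hνt : φ ν = ⊤
    · rw [hνt, EReal.top_sub_coe, EReal.coe_mul_top_of_pos hb, EReal.add_top_of_ne_bot (hmul _ _ _ ha)]
      exact le_top
    have h1 := h μ ν (φ μ).toReal (φ ν).toReal a b ha hb hab (EReal.le_coe_toReal hμt)
      (EReal.le_coe_toReal hνt)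
    have hx := hφ (a • μ + b • ν)
    rw [hlp_norm_comb μ ν a b hab]
    have hμb := hφ μ
    have hνb := hφ ν
    lift φ μ to ℝ using ⟨hμt, hμb⟩ with p
    lift φ ν to ℝ using ⟨hνt, hνb⟩ with q
    have hxt : φ (a • μ + b • ν) ≠ ⊤ := fun h => by
      rw [h] at h1; exact EReal.coe_ne_top _ (top_le_iff.1 h1)
    lift φ (a • μ + b • ν) to ℝ using ⟨hxt, hx⟩ with r
    simp only [EReal.toReal_coe] at h1
    norm_cast at h1 ⊢
    nlinarith

/-- Real-valued description of the epigraph of the conjugate. -/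
def HlpP (f : E → EReal) (μ : E) (c : ℝ) : Prop :=
  ∀ (x : E) (t : ℝ), f x ≤ t → ⟪μ, x⟫ - c ≤ t

lemma hlp_fenchel_le (f : E → EReal) (hf : ∀ x, f x ≠ ⊥) (μ : E) (c : ℝ) :
    fenchel f μ ≤ c ↔ HlpP f μ c := by
  unfold fenchel HlpP
  rw [iSup_le_iff]
  constructor
  · intro h x t hx
    have h1 := h x
    have hxt : f x ≠ ⊤ := fun h => by simp [h] at hx
    lift f x to ℝ using ⟨hxt, hf x⟩ with p
    norm_cast at h1 hx
    linarith
  · intro h x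
    by_cases hxt : f x = ⊤
    · rw [hxt, EReal.sub_top]; exact bot_le
    have h1 := h x (f x).toReal (EReal.le_coe_toReal hxt)
    have := hf x
    lift f x to ℝ using ⟨hxt, this⟩ with p
    simp only [EReal.toReal_coe] at h1
    norm_cast
    linarith

lemma hlp_fenchel_ne_bot (f : E → EReal) (hf : EProper f) (μ : E) : fenchel f μ ≠ ⊥ := by
  obtain ⟨h1, x, hx⟩ := hf
  intro h
  have h2 : (⟪μ, x⟫ : EReal) - f x ≤ fenchel f μ := le_iSup (fun x : E => (⟪μ, x⟫ : EReal) - f x) x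
  rw [h] at h2
  have := h1 x
  lift f x to ℝ using ⟨hx, this⟩ with p
  norm_cast at h2

lemma hlp_descent [CompleteSpace E] (β : ℝ) (hβ : 0 < β) (g : E → ℝ) (g' : E → E)
    (hg : ∀ x, HasGradientAt g (g' x) x) (hL : LipschitzWith β.toNNReal g') (x d : E) :
    g (x + d) ≤ g x + ⟪g' x, d⟫ + β / 2 * ‖d‖ ^ 2 := by
  have hd : ∀ t : ℝ, HasDerivAt (fun t : ℝ => g (x + t • d) - t * ⟪g' x, d⟫ - β / 2 * t ^ 2 * ‖d‖ ^ 2)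
      (⟪g' (x + t • d), d⟫ - ⟪g' x, d⟫ - β * t * ‖d‖ ^ 2) t := by
    intro t
    have h1 : HasDerivAt (fun t : ℝ => x + t • d) d t := by
      simpa using ((hasDerivAt_id t).smul_const d).const_add x
    have h2 := (hg (x + t • d)).hasFDerivAt.comp_hasDerivAt t h1
    rw [InnerProductSpace.toDual_apply_apply] at h2
    have h3 : HasDerivAt (fun t : ℝ => t * ⟪g' x, d⟫) (⟪g' x, d⟫) t := by
      simpa using (hasDerivAt_id t).mul_const (⟪g' x, d⟫)
    have h4 : HasDerivAt (fun t : ℝ => β / 2 * t ^ 2 * ‖d‖ ^ 2) (β * t * ‖d‖ ^ 2) t := by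
      have := (((hasDerivAt_id t).pow 2).const_mul (β / 2)).mul_const (‖d‖ ^ 2)
      have e : β * t * ‖d‖ ^ 2 = β / 2 * (((2 : ℕ) : ℝ) * id t ^ (2 - 1) * 1) * ‖d‖ ^ 2 := by
        norm_num [id]; left; ring
      rw [e]; exact this
    exact (h2.sub h3).sub h4
  have hanti : AntitoneOn (fun t : ℝ => g (x + t • d) - t * ⟪g' x, d⟫ - β / 2 * t ^ 2 * ‖d‖ ^ 2)
      (Set.Icc 0 1) := by
    apply antitoneOn_of_deriv_nonpos (convex_Icc 0 1)
    · exact fun t _ => (hd t).continuousAt.continuousWithinAt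
    · exact fun t _ => (hd t).differentiableAt.differentiableWithinAt
    · intro t ht
      rw [interior_Icc] at ht
      rw [(hd t).deriv, ← inner_sub_left]
      have h1 := real_inner_le_norm (g' (x + t • d) - g' x) d
      have h2 := hL.dist_le_mul (x + t • d) x
      rw [dist_eq_norm, dist_eq_norm, Real.coe_toNNReal _ hβ.le, add_sub_cancel_left, norm_smul,
        Real.norm_eq_abs, abs_of_pos ht.1] at h2
      nlinarith [norm_nonneg d]
  have := hanti (Set.left_mem_Icc.2 zero_le_one) (Set.right_mem_Icc.2 zero_le_one) zero_le_one
  simp at this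
  linarith

lemma hlp_forward [CompleteSpace E] (β : ℝ) (hβ : 0 < β) (f : E → EReal) (hproper : EProper f)
    (g : E → ℝ) (g' : E → E) (hfg : ∀ x, f x = (g x : EReal))
    (hg : ∀ x, HasGradientAt g (g' x) x) (hL : LipschitzWith β.toNNReal g') :
    StronglyConvexE (1 / β) (fenchel f) := by
  rw [hlp_sc_iff _ (hlp_fenchel_ne_bot f hproper)]
  intro μ ν c d a b ha hb hab hc hd
  rw [hlp_fenchel_le f hproper.1] at hc hd ⊢
  intro x t hx
  rw [hfg] at hx
  norm_cast at hx
  have h1 := hc (x + (b / β) • (μ - ν)) _ (hfg _).le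
  have h2 := hd (x + (-(a / β)) • (μ - ν)) _ (hfg _).le
  have h3 := hlp_descent β hβ g g' hg hL x ((b / β) • (μ - ν))
  have h4 := hlp_descent β hβ g g' hg hL x ((-(a / β)) • (μ - ν))
  have e : ⟪μ, μ - ν⟫ - ⟪ν, μ - ν⟫ = ‖μ - ν‖ ^ 2 := by
    rw [← inner_sub_left, real_inner_self_eq_norm_sq]
  simp only [inner_add_right, inner_add_left, inner_smul_left, inner_smul_right, conj_trivial,
    norm_smul, mul_pow, Real.norm_eq_abs, sq_abs] at h1 h2 h3 h4 ⊢
  generalize ⟪μ, μ - ν⟫ = i1 at *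
  generalize ⟪ν, μ - ν⟫ = i2 at *
  generalize ⟪g' x, μ - ν⟫ = i3 at *
  generalize ‖μ - ν‖ ^ 2 = N at *
  have k1 := mul_le_mul_of_nonneg_left (h1.trans h3) ha.le
  have k2 := mul_le_mul_of_nonneg_left (h2.trans h4) hb.le
  have k3 := add_le_add k1 k2
  obtain rfl : b = 1 - a := by linarith
  obtain rfl : i1 = N + i2 := by linarith
  have e1 : β / 2 * (((1 - a) / β) ^ 2 * N) = (1 - a) ^ 2 * (N / (2 * β)) := by
    field_simp
  have e2 : β / 2 * ((-(a / β)) ^ 2 * N) = a ^ 2 * (N / (2 * β)) := by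
    field_simp
  have e3 : a * (1 - a) * (1 / β / 2) * N = a * (1 - a) * (N / (2 * β)) := by
    field_simp
  rw [e1, e2] at k3
  rw [e3]
  have e4 : N / β = 2 * (N / (2 * β)) := by field_simp
  have e5 : (1 - a) / β * (N + i2) = (1 - a) * (2 * (N / (2 * β))) + (1 - a) * (i2 / β) := by
    rw [← e4]; field_simp
  have e6 : -(a / β) * i2 = - a * (i2 / β) := by field_simp
  have e7 : (1 - a) / β * i3 = (1 - a) * (i3 / β) := by field_simp
  have e8 : -(a / β) * i3 = - a * (i3 / β) := by field_simp
  rw [e5, e6, e7, e8] at k3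
  nlinarith

lemma hlp_coercive [CompleteSpace E] (β : ℝ) (hβ : 0 < β) (f : E → EReal) (hproper : EProper f)
    (g : E → ℝ) (g' : E → E) (hfg : ∀ x, f x = (g x : EReal))
    (hg : ∀ x, HasGradientAt g (g' x) x) (hL : LipschitzWith β.toNNReal g') :
    ECoercive (fenchel f) := by
  intro M
  refine ⟨‖g' 0‖ + (1 + 2 * β * |M + g 0|), fun μ hμ => ?_⟩
  apply EReal.le_of_forall_lt_iff_le.1
  intro z hz
  have hz := (hlp_fenchel_le f hproper.1 μ z).1 hz.le
  have h1 := hz ((1 / β) • (μ - g' 0)) _ (hfg _).le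
  have h2 := hlp_descent β hβ g g' hg hL 0 ((1 / β) • (μ - g' 0))
  rw [zero_add] at h2
  have e : ⟪μ, μ - g' 0⟫ - ⟪g' 0, μ - g' 0⟫ = ‖μ - g' 0‖ ^ 2 := by
    rw [← inner_sub_left, real_inner_self_eq_norm_sq]
  simp only [inner_smul_right, norm_smul, mul_pow, Real.norm_eq_abs, sq_abs] at h1 h2
  have hn : 1 + 2 * β * |M + g 0| ≤ ‖μ - g' 0‖ := by
    have := norm_sub_norm_le μ (g' 0); linarith
  have hA := abs_nonneg (M + g 0)
  have hA' := le_abs_self (M + g 0)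
  have h0 : 0 ≤ 2 * β * |M + g 0| := by positivity
  have hn2 : 2 * β * |M + g 0| ≤ ‖μ - g' 0‖ ^ 2 := by nlinarith
  generalize ⟪μ, μ - g' 0⟫ = i1 at *
  generalize ⟪g' 0, μ - g' 0⟫ = i2 at *
  generalize ‖μ - g' 0‖ ^ 2 = N at *
  obtain rfl : i1 = N + i2 := by linarith
  have e1 : 1 / β * (N + i2) = 2 * (N / (2 * β)) + i2 / β := by field_simp
  have e2 : β / 2 * ((1 / β) ^ 2 * N) = N / (2 * β) := by field_simp
  have e3 : 1 / β * i2 = i2 / β := by field_simp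
  have e4 : |M + g 0| ≤ N / (2 * β) := by
    rw [le_div_iff₀ (by positivity)]; linarith
  rw [e1] at h1
  rw [e2, e3] at h2
  norm_cast
  linarith

lemma hlp_sep [CompleteSpace E] (f : E → EReal)
    (hproper : EProper f) (hconv : EConvexOn f) (hlsc : LowerSemicontinuous f) (x0 : E) (t0 : ℝ)
    (h0 : (t0 : EReal) < f x0) :
    ∃ (p : E) (s c : ℝ), ⟪p, x0⟫ + s * t0 < c ∧
      ∀ (x : E) (t : ℝ), f x ≤ t → c < ⟪p, x⟫ + s * t := by
  have hcl : IsClosed {p : E × ℝ | f p.1 ≤ (p.2 : EReal)} := by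
    have := (lowerSemicontinuous_iff_isClosed_epigraph.1 hlsc)
    exact this.preimage (f := fun p : E × ℝ => (p.1, (p.2 : EReal)))
      (continuous_fst.prodMk (continuous_coe_real_ereal.comp continuous_snd))
  have hcv : Convex ℝ {p : E × ℝ | f p.1 ≤ (p.2 : EReal)} := by
    rw [convex_iff_forall_pos]
    rintro ⟨x, s⟩ hx ⟨y, t⟩ hy a b ha hb hab
    have hx : f x ≤ (s : EReal) := hx
    have hy : f y ≤ (t : EReal) := hy
    show f (a • x + b • y) ≤ ((a * s + b * t : ℝ) : EReal)
    refine (hconv x y a b ha hb hab).trans ?_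
    have hxt : f x ≠ ⊤ := fun h => by simp [h] at hx
    have hyt : f y ≠ ⊤ := fun h => by simp [h] at hy
    have hxb := hproper.1 x
    have hyb := hproper.1 y
    lift f x to ℝ using ⟨hxt, hxb⟩ with p
    lift f y to ℝ using ⟨hyt, hyb⟩ with q
    norm_cast at hx hy ⊢
    nlinarith
  obtain ⟨L, u, hu1, hu2⟩ := geometric_hahn_banach_point_closed (x := (x0, t0)) hcv hcl
    (by simpa using h0)
  have hL : ∀ (x : E) (t : ℝ), L (x, t) =
      ⟪(InnerProductSpace.toDual ℝ E).symm (L.comp (ContinuousLinearMap.inl ℝ E ℝ)), x⟫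
        + L (0, 1) * t := by
    intro x t
    rw [InnerProductSpace.toDual_symm_apply]
    have : ((x, t) : E × ℝ) = (x, 0) + t • ((0 : E), (1 : ℝ)) := by simp
    rw [this, map_add, map_smul]
    simp [mul_comm]
  refine ⟨(InnerProductSpace.toDual ℝ E).symm (L.comp (ContinuousLinearMap.inl ℝ E ℝ)),
    L (0, 1), u, ?_, ?_⟩
  · rw [← hL]; exact hu1
  · intro x t hx
    rw [← hL]; exact hu2 _ hx

lemma hlp_P_of_pos (f : E → EReal) (p : E) (s c : ℝ) (hs : 0 < s)
    (h : ∀ (x : E) (t : ℝ), f x ≤ t → c < ⟪p, x⟫ + s * t) :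
    HlpP f ((-(1 / s)) • p) (-(c / s)) := by
  intro x t hx
  have := h x t hx
  rw [inner_smul_left]
  simp only [conj_trivial]
  have e : -(1 / s) * ⟪p, x⟫ - -(c / s) = (c - ⟪p, x⟫) / s := by field_simp; ring
  rw [e, div_le_iff₀ hs]
  linarith

lemma hlp_P_exists [CompleteSpace E] (f : E → EReal)
    (hproper : EProper f) (hconv : EConvexOn f) (hlsc : LowerSemicontinuous f) :
    ∃ μ c, HlpP f μ c := by
  obtain ⟨x1, hx1⟩ := hproper.2
  have hb := hproper.1 x1
  obtain ⟨r, hr⟩ : ∃ r : ℝ, f x1 = r := ⟨_, (EReal.coe_toReal hx1 hb).symm⟩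
  obtain ⟨p, s, c, h1, h2⟩ := hlp_sep f hproper hconv hlsc x1 (r - 1)
    (by rw [hr]; norm_cast; linarith)
  have h3 := h2 x1 r hr.le
  exact ⟨_, _, hlp_P_of_pos f p s c (by nlinarith) h2⟩

lemma hlp_moreau [CompleteSpace E] (f : E → EReal)
    (hproper : EProper f) (hconv : EConvexOn f) (hlsc : LowerSemicontinuous f) (x0 : E) (t0 : ℝ)
    (h0 : (t0 : EReal) < f x0) : ∃ μ c, HlpP f μ c ∧ t0 < ⟪μ, x0⟫ - c := by
  obtain ⟨p, s, c, h1, h2⟩ := hlp_sep f hproper hconv hlsc x0 t0 h0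
  obtain ⟨x1, hx1⟩ := hproper.2
  have hb := hproper.1 x1
  obtain ⟨r, hr⟩ : ∃ r : ℝ, f x1 = r := ⟨_, (EReal.coe_toReal hx1 hb).symm⟩
  have hs : 0 ≤ s := by
    by_contra! hs
    have h3 := h2 x1 (r + |(⟪p, x1⟫ + s * r - c) / s|)
      (by rw [hr]; norm_cast; linarith [abs_nonneg ((⟪p, x1⟫ + s * r - c) / s)])
    have h4 := neg_le_abs ((⟪p, x1⟫ + s * r - c) / s)
    have h5 := mul_le_mul_of_nonpos_left h4 hs.le
    have h6 : s * -((⟪p, x1⟫ + s * r - c) / s) = -(⟪p, x1⟫ + s * r - c) := by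
      field_simp [hs.ne]
    nlinarith
  rcases hs.lt_or_eq with hs | rfl
  · refine ⟨_, _, hlp_P_of_pos f p s c hs h2, ?_⟩
    rw [inner_smul_left]
    simp only [conj_trivial]
    have e : -(1 / s) * ⟪p, x0⟫ - -(c / s) = (c - ⟪p, x0⟫) / s := by field_simp; ring
    rw [e, lt_div_iff₀ hs]
    linarith
  · obtain ⟨μ, e, hP⟩ := hlp_P_exists f hproper hconv hlsc
    have hd : 0 < c - ⟪p, x0⟫ := by linarith
    set k : ℝ := (|t0 - (⟪μ, x0⟫ - e)| + 1) / (c - ⟪p, x0⟫) with hk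
    have hkp : 0 ≤ k := by positivity
    have hk2 : k * (c - ⟪p, x0⟫) = |t0 - (⟪μ, x0⟫ - e)| + 1 := by
      rw [hk]; field_simp
    refine ⟨μ - k • p, e - k * c, ?_, ?_⟩
    · intro x t hx
      have h3 := hP x t hx
      have h4 := h2 x t hx
      rw [inner_sub_left, inner_smul_left]
      simp only [conj_trivial]
      nlinarith
    · rw [inner_sub_left, inner_smul_left]
      simp only [conj_trivial]
      have := le_abs_self (t0 - (⟪μ, x0⟫ - e))
      linarith

lemma hlp_backward [CompleteSpace E] (β : ℝ) (hβ : 0 < β) (f : E → EReal)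
    (hproper : EProper f) (hconv : EConvexOn f) (hlsc : LowerSemicontinuous f)
    (hS : StronglyConvexE (1 / β) (fenchel f)) :
    ∃ (g : E → ℝ) (g' : E → E), (∀ x, f x = (g x : EReal)) ∧
        (∀ x, HasGradientAt g (g' x) x) ∧ LipschitzWith β.toNNReal g' := by
  rw [hlp_sc_iff _ (hlp_fenchel_ne_bot f hproper)] at hS
  simp only [hlp_fenchel_le f hproper.1] at hS
  have hfin : ∀ x, f x ≠ ⊤ := by
    intro x hx
    obtain ⟨x1, hx1⟩ := hproper.2
    have hb := hproper.1 x1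
    obtain ⟨r, hr⟩ : ∃ r : ℝ, f x1 = r := ⟨_, (EReal.coe_toReal hx1 hb).symm⟩
    obtain ⟨μ0, c0, h0⟩ := hlp_P_exists f hproper hconv hlsc
    obtain ⟨μ, c, hP, hlt⟩ := hlp_moreau f hproper hconv hlsc x
      (⟪μ0, x⟫ - ⟪μ0, x1⟫ + c0 + 2 * r - ⟪μ0, x1⟫ + β * ‖x - x1‖ ^ 2)
      (by rw [hx]; exact EReal.coe_lt_top _)
    have h1 := hS μ μ0 c c0 (1 / 2) (1 / 2) (by norm_num) (by norm_num) (by norm_num) hP h0 x1 r hr.le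
    simp only [inner_add_left, inner_smul_left, conj_trivial] at h1
    have h2 := real_inner_le_norm (μ - μ0) (x - x1)
    simp only [inner_sub_left, inner_sub_right] at h2
    have h3 : ‖μ - μ0‖ * ‖x - x1‖ ≤ 1 / (4 * β) * ‖μ - μ0‖ ^ 2 + β * ‖x - x1‖ ^ 2 := by
      have := sq_nonneg (‖μ - μ0‖ - 2 * β * ‖x - x1‖)
      have e : 1 / (4 * β) * ‖μ - μ0‖ ^ 2 + β * ‖x - x1‖ ^ 2 - ‖μ - μ0‖ * ‖x - x1‖
        = (‖μ - μ0‖ - 2 * β * ‖x - x1‖) ^ 2 / (4 * β) := by field_simp; ring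
      have : 0 ≤ (‖μ - μ0‖ - 2 * β * ‖x - x1‖) ^ 2 / (4 * β) := by positivity
      linarith
    have e : (1:ℝ) / 2 * (1 / 2) * (1 / β / 2) * ‖μ - μ0‖ ^ 2
      = 1 / 2 * (1 / (4 * β) * ‖μ - μ0‖ ^ 2) := by field_simp; ring
    rw [e] at h1
    linarith
  obtain ⟨F, hF⟩ : ∃ F : E → ℝ, ∀ x, f x = F x :=
    ⟨fun x => (f x).toReal, fun x => (EReal.coe_toReal (hfin x) (hproper.1 x)).symm⟩
  have hPF : ∀ μ c, HlpP f μ c ↔ ∀ x, ⟪μ, x⟫ - c ≤ F x := by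
    intro μ c
    constructor
    · intro h x; exact h x _ (hF x).le
    · intro h x t hx
      rw [hF] at hx
      norm_cast at hx
      exact (h x).trans hx
  simp only [hPF] at hS
  have hsub : ∀ x, ∃ m : E, ∀ y, ⟪m, y⟫ - (⟪m, x⟫ - F x) ≤ F y := by
    intro x
    have hex : ∀ n : ℕ, ∃ q : E × ℝ, (∀ y, ⟪q.1, y⟫ - q.2 ≤ F y) ∧
        F x - 1 / ((n : ℝ) + 1) < ⟪q.1, x⟫ - q.2 := by
      intro n
      obtain ⟨μ, c, h1, h2⟩ := hlp_moreau f hproper hconv hlsc x (F x - 1 / ((n : ℝ) + 1))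
        (by rw [hF, EReal.coe_lt_coe_iff]; have : 0 < 1 / ((n : ℝ) + 1) := by positivity
            linarith)
      exact ⟨(μ, c), (hPF _ _).1 h1, h2⟩
    choose q hq1 hq2 using hex
    have hlim : Filter.Tendsto (fun n : ℕ => 1 / ((n : ℝ) + 1)) Filter.atTop (nhds 0) :=
      tendsto_one_div_add_atTop_nhds_zero_nat
    have hC : CauchySeq (fun n => (q n).1) := by
      apply cauchySeq_of_le_tendsto_0' (fun n : ℕ => √(8 * β * (1 / ((n : ℝ) + 1))))
      · intro n k hnk
        rw [dist_eq_norm]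
        apply Real.le_sqrt_of_sq_le
        have h1 := hS _ _ _ _ (1 / 2) (1 / 2) (by norm_num) (by norm_num) (by norm_num)
          (hq1 n) (hq1 k) x
        simp only [inner_add_left, inner_smul_left, conj_trivial] at h1
        have h2 := hq2 n
        have h3 := hq2 k
        have h4 : 1 / ((k : ℝ) + 1) ≤ 1 / ((n : ℝ) + 1) := by gcongr
        have e : (1:ℝ) / 2 * (1 / 2) * (1 / β / 2) * ‖(q n).1 - (q k).1‖ ^ 2
          = ‖(q n).1 - (q k).1‖ ^ 2 / (8 * β) := by field_simp; ring
        rw [e] at h1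
        have h5 : ‖(q n).1 - (q k).1‖ ^ 2 / (8 * β) ≤ 1 / ((n : ℝ) + 1) := by linarith
        rw [div_le_iff₀ (by positivity)] at h5
        linarith
      · have := (hlim.const_mul (8 * β)).sqrt
        simpa using this
    obtain ⟨m, hm⟩ := cauchySeq_tendsto_of_complete hC
    refine ⟨m, fun y => ?_⟩
    have hin : ∀ z : E, Filter.Tendsto (fun n => ⟪(q n).1, z⟫) Filter.atTop (nhds ⟪m, z⟫) :=
      fun z => hm.inner tendsto_const_nhds
    have hl := ((hin y).sub ((hin x).sub_const (F x))).sub hlim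
    rw [sub_zero] at hl
    refine le_of_tendsto hl (Filter.Eventually.of_forall fun n => ?_)
    have h1 := hq1 n y
    have h2 := hq2 n
    linarith
  choose m hm using hsub
  -- strong subgradient inequality
  have hstr : ∀ x y, 1 / (2 * β) * ‖m y - m x‖ ^ 2 ≤ ⟪m y, y⟫ - F y - ⟪m y, x⟫ + F x := by
    intro x y
    have key : ∀ b : ℝ, 0 < b → b < 1 →
        b * (1 / (2 * β) * ‖m y - m x‖ ^ 2) ≤ ⟪m y, y⟫ - F y - ⟪m y, x⟫ + F x := by
      intro b hb hb1
      have h1 := hS (m y) (m x) _ _ (1 - b) b (by linarith) hb (by ring) (hm y) (hm x) x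
      simp only [inner_add_left, inner_smul_left, conj_trivial] at h1
      have e : (1 - b) * b * (1 / β / 2) * ‖m y - m x‖ ^ 2
        = (1 - b) * (b * (1 / (2 * β) * ‖m y - m x‖ ^ 2)) := by field_simp
      rw [e] at h1
      have hb2 : 0 < 1 - b := by linarith
      refine le_of_mul_le_mul_left ?_ hb2
      linarith
    have hl : Filter.Tendsto (fun b : ℝ => b * (1 / (2 * β) * ‖m y - m x‖ ^ 2))
        (nhdsWithin 1 (Set.Iio 1)) (nhds (1 * (1 / (2 * β) * ‖m y - m x‖ ^ 2))) :=
      (Filter.Tendsto.mul_const _ Filter.tendsto_id).mono_left nhdsWithin_le_nhds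
    rw [one_mul] at hl
    refine le_of_tendsto hl ?_
    filter_upwards [Ioo_mem_nhdsLT (show (0 : ℝ) < 1 by norm_num)] with b hb
    exact key b hb.1 hb.2
  have hlip : ∀ x y, ‖m x - m y‖ ≤ β * ‖x - y‖ := by
    intro x y
    have h1 := hstr x y
    have h2 := hstr y x
    rw [norm_sub_rev] at h1
    have h3 := real_inner_le_norm (m x - m y) (x - y)
    simp only [inner_sub_left, inner_sub_right] at h3
    have h4 : 2 * (1 / (2 * β) * ‖m x - m y‖ ^ 2) ≤ ‖m x - m y‖ * ‖x - y‖ := by linarith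
    have e : 2 * (1 / (2 * β) * ‖m x - m y‖ ^ 2) = ‖m x - m y‖ ^ 2 / β := by field_simp
    rw [e, div_le_iff₀ hβ] at h4
    by_contra! hcon
    have : 0 < ‖m x - m y‖ := lt_of_le_of_lt (by positivity) hcon
    nlinarith
  refine ⟨F, m, hF, ?_, ?_⟩
  · intro x
    rw [hasGradientAt_iff_hasFDerivAt, hasFDerivAt_iff_isLittleO_nhds_zero]
    have hO : (fun h : E => F (x + h) - F x - (InnerProductSpace.toDual ℝ E (m x)) h)
        =O[nhds 0] (fun h : E => ‖h‖ ^ 2) := by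
      apply Asymptotics.IsBigO.of_bound β
      refine Filter.Eventually.of_forall fun h => ?_
      rw [InnerProductSpace.toDual_apply_apply]
      have h1 := hm x (x + h)
      have h2 := hm (x + h) x
      have h3 := real_inner_le_norm (m (x + h) - m x) h
      have h4 := hlip (x + h) x
      rw [add_sub_cancel_left] at h4
      simp only [inner_add_right, inner_sub_left] at h1 h2 h3
      have h5 := mul_le_mul_of_nonneg_right h4 (norm_nonneg h)
      rw [Real.norm_eq_abs, Real.norm_eq_abs, abs_of_nonneg (by linarith),
        abs_of_nonneg (by positivity)]
      nlinarith
    refine hO.trans_isLittleO ?_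
    have := Asymptotics.isLittleO_norm_pow_id (E' := E) (n := 2) (by norm_num)
    exact this
  · apply LipschitzWith.of_dist_le_mul
    intro x y
    rw [dist_eq_norm, dist_eq_norm, Real.coe_toNNReal _ hβ.le]
    exact hlip x y

/-- Duality between Lipschitz gradients and strong convexity: a proper convex lsc `f` is
finite-valued and Fréchet differentiable with `β`-Lipschitz gradient iff `f*` is
`(1/β)`-strongly convex; in that case `f*` is moreover coercive. -/
theorem stmt7 [CompleteSpace E] (β : ℝ) (hβ : 0 < β) (f : E → EReal)
    (hproper : EProper f) (hconv : EConvexOn f) (hlsc : LowerSemicontinuous f) :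
    ((∃ (g : E → ℝ) (g' : E → E), (∀ x, f x = (g x : EReal)) ∧
        (∀ x, HasGradientAt g (g' x) x) ∧ LipschitzWith β.toNNReal g') ↔
      StronglyConvexE (1 / β) (fenchel f)) ∧
    ((∃ (g : E → ℝ) (g' : E → E), (∀ x, f x = (g x : EReal)) ∧
        (∀ x, HasGradientAt g (g' x) x) ∧ LipschitzWith β.toNNReal g') →
      ECoercive (fenchel f)) := by
  refine ⟨⟨?_, hlp_backward β hβ f hproper hconv hlsc⟩, ?_⟩
  · rintro ⟨g, g', h1, h2, h3⟩
    exact hlp_forward β hβ f hproper g g' h1 h2 h3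
  · rintro ⟨g, g', h1, h2, h3⟩
    exact hlp_coercive β hβ f hproper g g' h1 h2 h3
end
end

section
/- Let E be a real Hilbert space and f : E → ℝ ∪ {+∞} be proper, convex and lower semicontinuous. Then its perspective function f̃ : E × ℝ → ℝ ∪ {+∞} is proper, convex and lower semicontinuous, and its Fenchel conjugate satisfies, for all (μ, z) ∈ E × ℝ, (f̃)*(μ, z) = 0 if f*(μ) ≤ −z and (f̃)*(μ, z) = +∞ otherwise; that is, (f̃)*(μ, z) is the indicator function of the epigraph of f* evaluated at (μ, −z). -/
open scoped Classical
open scoped RealInnerProductSpace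

noncomputable section

variable {E : Type*} [NormedAddCommGroup E] [InnerProductSpace ℝ E]

/-- The perspective function of `f`: `f̃(x,s) = s f(x/s)` for `s > 0`,
`f̃(x,0) = sup_{y ∈ dom f} (f(y+x) - f(y))`, and `+∞` for `s < 0`. -/
def perspective (f : E → EReal) (p : E × ℝ) : EReal :=
  if 0 < p.2 then (p.2 : EReal) * f (p.2⁻¹ • p.1)
  else if p.2 = 0 then ⨆ y : {y : E // f y ≠ ⊤}, (f ((y : E) + p.1) - f (y : E))
  else ⊤

/-- The Fenchel conjugate of a function on `E × ℝ`, with respect to the canonical pairing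
`⟨(μ,z),(x,s)⟩ = ⟨μ,x⟩ + z s`. -/
def conjProd (g : E × ℝ → EReal) (μ : E) (z : ℝ) : EReal :=
  ⨆ p : E × ℝ, ((⟪μ, p.1⟫ + z * p.2 : ℝ) : EReal) - g p

def minorants (f : E → EReal) : Set (E × ℝ) :=
  {q | ∀ y, ((⟪q.1, y⟫ - q.2 : ℝ) : EReal) ≤ f y}

theorem sep_aux [CompleteSpace E] (f : E → EReal)
    (hproper : EProper f) (hconv : EConvexOn f) (hlsc : LowerSemicontinuous f)
    (x : E) (r : ℝ) (hr : (r : EReal) < f x) :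
    ∃ (ν : E) (β u : ℝ), 0 ≤ β ∧ ⟪ν, x⟫ + β * r < u ∧
      ∀ (y : E) (t : ℝ), f y ≤ (t : EReal) → u < ⟪ν, y⟫ + β * t := by
  let S : Set (E × ℝ) := {p | f p.1 ≤ (p.2 : EReal)}
  have hS1 : IsClosed S := by
    have h1 : IsClosed {p : E × EReal | f p.1 ≤ p.2} := hlsc.isClosed_epigraph
    have h2 : Continuous (fun p : E × ℝ => (p.1, (p.2 : EReal))) :=
      continuous_fst.prodMk (continuous_coe_real_ereal.comp continuous_snd)
    exact h1.preimage h2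
  have hS2 : Convex ℝ S := by
    rw [convex_iff_forall_pos]
    rintro ⟨y1, t1⟩ h1 ⟨y2, t2⟩ h2 a b ha hb hab
    have h := hconv y1 y2 a b ha hb hab
    change f (a • y1 + b • y2) ≤ ((a * t1 + b * t2 : ℝ) : EReal)
    refine h.trans ?_
    push_cast
    have h1' : f y1 ≤ (t1 : EReal) := h1
    have h2' : f y2 ≤ (t2 : EReal) := h2
    have ha' : (0 : EReal) ≤ (a : EReal) := by exact_mod_cast ha.le
    have hb' : (0 : EReal) ≤ (b : EReal) := by exact_mod_cast hb.le
    exact add_le_add (mul_le_mul_of_nonneg_left h1' ha') (mul_le_mul_of_nonneg_left h2' hb')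
  have hx : (x, r) ∉ S := fun h => absurd hr (not_lt.mpr h)
  obtain ⟨g, u, h1, h2⟩ := geometric_hahn_banach_point_closed hS2 hS1 hx
  have hg : ∀ (y : E) (t : ℝ), g (y, t) =
      ⟪(InnerProductSpace.toDual ℝ E).symm (g.comp (ContinuousLinearMap.inl ℝ E ℝ)), y⟫
        + g (0, 1) * t := by
    intro y t
    rw [InnerProductSpace.toDual_symm_apply]
    have : ((y, t) : E × ℝ) = (y, 0) + t • ((0 : E), (1 : ℝ)) := by simp
    rw [this, map_add, map_smul]
    simp [mul_comm]
  have hub : ∀ (y : E) (t : ℝ), f y ≤ (t : EReal) → u < g (y, t) := fun y t h => h2 (y, t) h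
  refine ⟨_, g (0, 1), u, ?_, by rw [← hg]; exact h1, fun y t h => by rw [← hg]; exact hub y t h⟩
  by_contra hneg
  push Not at hneg
  obtain ⟨y0, hy0⟩ := hproper.2
  lift f y0 to ℝ using ⟨hy0, hproper.1 y0⟩ with t0 ht0
  have key : ∀ k : ℝ, 0 ≤ k → u < g (y0, t0) + g (0, 1) * k := by
    intro k hk
    have := hub y0 (t0 + k) (by rw [← ht0]; exact_mod_cast (by linarith))
    rw [hg] at this ⊢
    linarith
  have h0 := key 0 le_rfl
  have := key ((u - g (y0, t0)) / g (0, 1)) (div_nonneg_of_nonpos (by linarith) hneg.le)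
  rw [mul_div_cancel₀ _ hneg.ne] at this
  linarith

theorem minor_of_pos (f : E → EReal) (hb : ∀ x, f x ≠ ⊥) (x : E) (r : ℝ) (ν : E) (β u : ℝ)
    (hβ : 0 < β) (h1 : ⟪ν, x⟫ + β * r < u)
    (h2 : ∀ (y : E) (t : ℝ), f y ≤ (t : EReal) → u < ⟪ν, y⟫ + β * t) :
    ∃ q ∈ minorants f, r ≤ ⟪q.1, x⟫ - q.2 := by
  refine ⟨(-(β⁻¹ • ν), -(u / β)), ?_, ?_⟩
  · intro y
    by_cases hy : f y = ⊤
    · rw [hy]; exact le_top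
    · have := h2 y (f y).toReal (EReal.le_coe_toReal hy)
      rw [← EReal.coe_toReal hy (hb y)]
      refine EReal.coe_le_coe_iff.mpr ?_
      simp only [inner_neg_left, real_inner_smul_left]
      have : u / β < β⁻¹ * ⟪ν, y⟫ + (f y).toReal := by
        rw [div_lt_iff₀ hβ]; field_simp; linarith
      linarith
  · simp only [inner_neg_left, real_inner_smul_left]
    have : β⁻¹ * ⟪ν, x⟫ + r < u / β := by
      rw [lt_div_iff₀ hβ]; field_simp; linarith
    linarith

theorem exists_minor [CompleteSpace E] (f : E → EReal)
    (hproper : EProper f) (hconv : EConvexOn f) (hlsc : LowerSemicontinuous f) :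
    ∃ q, q ∈ minorants f := by
  obtain ⟨y0, hy0⟩ := hproper.2
  have hc := EReal.coe_toReal hy0 (hproper.1 y0)
  obtain ⟨ν, β, u, hβ, h1, h2⟩ := sep_aux f hproper hconv hlsc y0 ((f y0).toReal - 1)
    (by rw [← hc]; exact_mod_cast (by simp))
  have h3 := h2 y0 _ hc.ge
  have : 0 < β := by nlinarith
  obtain ⟨q, hq, -⟩ := minor_of_pos f hproper.1 y0 _ ν β u this h1 h2
  exact ⟨q, hq⟩

theorem exists_minor_ge [CompleteSpace E] (f : E → EReal)
    (hproper : EProper f) (hconv : EConvexOn f) (hlsc : LowerSemicontinuous f)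
    (x : E) (r : ℝ) (hr : (r : EReal) < f x) :
    ∃ q ∈ minorants f, r ≤ ⟪q.1, x⟫ - q.2 := by
  obtain ⟨ν, β, u, hβ, h1, h2⟩ := sep_aux f hproper hconv hlsc x r hr
  rcases hβ.lt_or_eq with hβ | hβ
  · exact minor_of_pos f hproper.1 x r ν β u hβ h1 h2
  subst hβ
  simp only [zero_mul, add_zero] at h1 h2
  obtain ⟨⟨μ, c⟩, hq⟩ := exists_minor f hproper hconv hlsc
  obtain ⟨k, hk0, hk⟩ : ∃ k : ℝ, 0 ≤ k ∧ r - (⟪μ, x⟫ - c) ≤ k * (u - ⟪ν, x⟫) := by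
    have hpos : 0 < u - ⟪ν, x⟫ := by linarith
    refine ⟨|r - (⟪μ, x⟫ - c)| / (u - ⟪ν, x⟫), by positivity, ?_⟩
    rw [div_mul_cancel₀ _ hpos.ne']
    exact le_abs_self _
  refine ⟨(μ - k • ν, c - k * u), ?_, ?_⟩
  · intro y
    by_cases hy : f y = ⊤
    · rw [hy]; exact le_top
    · have h3 := h2 y (f y).toReal (EReal.le_coe_toReal hy)
      refine le_trans (EReal.coe_le_coe_iff.mpr ?_) (hq y)
      simp only [inner_sub_left, real_inner_smul_left]
      nlinarith
  · simp only [inner_sub_left, real_inner_smul_left]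
    linarith

theorem persp_eq [CompleteSpace E] (f : E → EReal)
    (hproper : EProper f) (hconv : EConvexOn f) (hlsc : LowerSemicontinuous f) (p : E × ℝ) :
    perspective f p =
      ⨆ q : minorants f, ((⟪q.1.1, p.1⟫ - q.1.2 * p.2 : ℝ) : EReal) := by
  obtain ⟨x, s⟩ := p
  simp only [perspective]
  split_ifs with h h0
  · have hs : (0 : EReal) ≤ (s : EReal) := by exact_mod_cast h.le
    apply le_antisymm
    · refine EReal.ge_of_forall_gt_iff_ge.mp fun r hr => ?_
      have hr' : ((r / s : ℝ) : EReal) < f (s⁻¹ • x) := by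
        by_contra hcon
        push Not at hcon
        have := mul_le_mul_of_nonneg_left hcon hs
        rw [← EReal.coe_mul, mul_div_cancel₀ _ h.ne'] at this
        exact absurd hr (not_lt.mpr this)
      obtain ⟨q, hq, hle⟩ := exists_minor_ge f hproper hconv hlsc _ _ hr'
      refine le_trans ?_ (le_iSup _ (⟨q, hq⟩ : minorants f))
      refine EReal.coe_le_coe_iff.mpr ?_
      rw [real_inner_smul_right, div_le_iff₀ h] at hle
      field_simp at hle
      linarith
    · refine iSup_le fun q => ?_
      have := mul_le_mul_of_nonneg_left (q.2 (s⁻¹ • x)) hs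
      refine le_trans ?_ this
      rw [← EReal.coe_mul]
      refine EReal.coe_le_coe_iff.mpr ?_
      rw [real_inner_smul_right]
      field_simp
      exact le_of_eq (by ring)
  · subst h0
    simp only [mul_zero, sub_zero]
    apply le_antisymm
    · refine iSup_le fun ⟨y, hy⟩ => ?_
      have hc := EReal.coe_toReal hy (hproper.1 y)
      simp only
      refine EReal.ge_of_forall_gt_iff_ge.mp fun r hr => ?_
      have hr' : ((r + (f y).toReal : ℝ) : EReal) < f (y + x) := by
        rw [← hc] at hr
        by_contra hcon
        push Not at hcon
        have := EReal.sub_le_sub hcon (le_refl (((f y).toReal : ℝ) : EReal))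
        rw [← EReal.coe_sub, add_sub_cancel_right] at this
        exact absurd hr (not_lt.mpr this)
      obtain ⟨q, hq, hle⟩ := exists_minor_ge f hproper hconv hlsc _ _ hr'
      refine le_trans ?_ (le_iSup _ (⟨q, hq⟩ : minorants f))
      refine EReal.coe_le_coe_iff.mpr ?_
      have h3 := hq y
      rw [← hc, EReal.coe_le_coe_iff] at h3
      rw [inner_add_right] at hle
      simp only
      linarith
    · refine iSup_le fun ⟨⟨μ, c⟩, hq⟩ => ?_
      simp only
      refine EReal.le_of_forall_lt_iff_le.mp fun R hR => ?_
      refine EReal.coe_le_coe_iff.mpr ?_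
      have step : ∀ y, f y ≠ ⊤ → f (y + x) ≤ (((f y).toReal + R : ℝ) : EReal) := by
        intro y hy
        have hc := EReal.coe_toReal hy (hproper.1 y)
        have h3 := (le_iSup (fun y : {y : E // f y ≠ ⊤} => f ((y : E) + x) - f (y : E))
          ⟨y, hy⟩).trans hR.le
        simp only at h3
        rw [← hc] at h3
        by_contra hcon
        push Not at hcon
        by_cases ht : f (y + x) = ⊤
        · rw [ht] at h3
          simp at h3
        · rw [← EReal.coe_toReal ht (hproper.1 _)] at h3 hcon
          rw [← EReal.coe_sub, EReal.coe_le_coe_iff] at h3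
          rw [EReal.coe_lt_coe_iff] at hcon
          linarith
      obtain ⟨y0, hy0⟩ := hproper.2
      have it : ∀ n : ℕ, f (y0 + (n : ℝ) • x) ≤ (((f y0).toReal + n * R : ℝ) : EReal) := by
        intro n
        induction n with
        | zero => simpa using EReal.le_coe_toReal hy0
        | succ n ih =>
          have hne : f (y0 + (n : ℝ) • x) ≠ ⊤ := (ih.trans_lt (EReal.coe_lt_top _)).ne
          have h4 := step _ hne
          have e : y0 + ((n + 1 : ℕ) : ℝ) • x = y0 + (n : ℝ) • x + x := by
            push_cast; rw [add_smul, one_smul, add_assoc]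
          rw [e]
          refine h4.trans (EReal.coe_le_coe_iff.mpr ?_)
          rw [← EReal.coe_toReal hne (hproper.1 _), EReal.coe_le_coe_iff] at ih
          push_cast
          linarith
      by_contra hcon
      push Not at hcon
      obtain ⟨n, hn⟩ := exists_nat_gt (((f y0).toReal - (⟪μ, y0⟫ - c)) / (⟪μ, x⟫ - R))
      rw [div_lt_iff₀ (by linarith)] at hn
      have h5 := (hq (y0 + (n : ℝ) • x)).trans (it n)
      rw [EReal.coe_le_coe_iff] at h5
      simp only [inner_add_right, real_inner_smul_right] at h5
      nlinarith
  · have hs : s < 0 := lt_of_le_of_ne (not_lt.mp h) h0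
    obtain ⟨⟨μ, c⟩, hq⟩ := exists_minor f hproper hconv hlsc
    refine le_antisymm ?_ le_top
    refine EReal.ge_of_forall_gt_iff_ge.mp fun r _ => ?_
    have hk0 : 0 ≤ |r - (⟪μ, x⟫ - c * s)| / (-s) := div_nonneg (abs_nonneg _) (by linarith)
    refine le_trans ?_ (le_iSup _
      (⟨(μ, c + |r - (⟪μ, x⟫ - c * s)| / (-s)), ?_⟩ : minorants f))
    · refine EReal.coe_le_coe_iff.mpr ?_
      have e : |r - (⟪μ, x⟫ - c * s)| / (-s) * s = - |r - (⟪μ, x⟫ - c * s)| := by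
        field_simp
      simp only [add_mul, e]
      have := le_abs_self (r - (⟪μ, x⟫ - c * s))
      linarith
    · intro y
      refine le_trans (EReal.coe_le_coe_iff.mpr ?_) (hq y)
      simp only
      linarith

/-- The perspective of a proper convex lsc function is proper convex lsc, and its conjugate
is the indicator of the epigraph of `f*` evaluated at `(μ, -z)`. -/
theorem stmt8 [CompleteSpace E] (f : E → EReal)
    (hproper : EProper f) (hconv : EConvexOn f) (hlsc : LowerSemicontinuous f) :
    EProper (perspective f) ∧ EConvexOn (perspective f) ∧
    LowerSemicontinuous (perspective f) ∧
    ∀ (μ : E) (z : ℝ), conjProd (perspective f) μ z =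
      if fenchel f μ ≤ ((-z : ℝ) : EReal) then 0 else ⊤ := by
  have hP := persp_eq f hproper hconv hlsc
  obtain ⟨y0, hy0⟩ := hproper.2
  have hle : ∀ q ∈ minorants f, ∀ p : E × ℝ,
      ((⟪q.1, p.1⟫ - q.2 * p.2 : ℝ) : EReal) ≤ perspective f p := by
    intro q hq p
    rw [hP]
    exact le_iSup (fun q : minorants f => ((⟪q.1.1, p.1⟫ - q.1.2 * p.2 : ℝ) : EReal)) ⟨q, hq⟩
  refine ⟨⟨?_, ?_⟩, ?_, ?_, ?_⟩
  · intro p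
    obtain ⟨q, hq⟩ := exists_minor f hproper hconv hlsc
    exact ((EReal.bot_lt_coe _).trans_le (hle q hq p)).ne'
  · refine ⟨(y0, 1), ?_⟩
    simpa [perspective] using hy0
  · intro p1 p2 a b ha hb hab
    rw [hP (a • p1 + b • p2)]
    refine iSup_le fun q => ?_
    have ha' : (0 : EReal) ≤ (a : EReal) := by exact_mod_cast ha.le
    have hb' : (0 : EReal) ≤ (b : EReal) := by exact_mod_cast hb.le
    refine le_trans ?_ (add_le_add (mul_le_mul_of_nonneg_left (hle q.1 q.2 p1) ha')
      (mul_le_mul_of_nonneg_left (hle q.1 q.2 p2) hb'))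
    rw [← EReal.coe_mul, ← EReal.coe_mul, ← EReal.coe_add]
    refine EReal.coe_le_coe_iff.mpr (le_of_eq ?_)
    simp only [Prod.fst_add, Prod.snd_add, Prod.smul_fst, Prod.smul_snd, inner_add_right,
      real_inner_smul_right, smul_eq_mul]
    ring
  · have : perspective f = fun p =>
        ⨆ q : minorants f, ((⟪q.1.1, p.1⟫ - q.1.2 * p.2 : ℝ) : EReal) := funext hP
    rw [this]
    refine lowerSemicontinuous_iSup fun q => Continuous.lowerSemicontinuous ?_
    exact continuous_coe_real_ereal.comp (by fun_prop)
  · intro μ z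
    split_ifs with h
    · have hq : (μ, -z) ∈ minorants f := by
        intro y
        have h1 := (le_iSup (fun x : E => ((⟪μ, x⟫ : ℝ) : EReal) - f x) y).trans h
        by_cases hy : f y = ⊤
        · rw [hy]; exact le_top
        · rw [← EReal.coe_toReal hy (hproper.1 y)] at h1 ⊢
          rw [← EReal.coe_sub, EReal.coe_le_coe_iff] at h1
          refine EReal.coe_le_coe_iff.mpr ?_
          simp only
          linarith
      apply le_antisymm
      · refine iSup_le fun p => ?_
        have h1 := hle _ hq p
        have e : (⟪μ, p.1⟫ + z * p.2 : ℝ) = ⟪μ, p.1⟫ - (-z) * p.2 := by ring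
        rw [e]
        exact EReal.sub_nonpos.mpr h1
      · refine le_trans ?_ (le_iSup _ ((0 : E), (0 : ℝ)))
        have : perspective f ((0 : E), (0 : ℝ)) ≤ 0 := by
          rw [hP]
          refine iSup_le fun q => ?_
          simp
        simp only [inner_zero_right, mul_zero, add_zero]
        have := EReal.sub_le_sub (le_refl ((0 : ℝ) : EReal)) this
        simpa using this
    · have : ∃ x, ((-z : ℝ) : EReal) < ((⟪μ, x⟫ : ℝ) : EReal) - f x := by
        by_contra hcon
        push Not at hcon
        exact h (iSup_le hcon)
      obtain ⟨x, hx⟩ := this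
      have hxt : f x ≠ ⊤ := by
        intro ht
        rw [ht] at hx
        simp at hx
      have hc := EReal.coe_toReal hxt (hproper.1 x)
      rw [← hc, ← EReal.coe_sub, EReal.coe_lt_coe_iff] at hx
      have hd : 0 < ⟪μ, x⟫ - (f x).toReal + z := by linarith
      refine le_antisymm le_top ?_
      refine EReal.ge_of_forall_gt_iff_ge.mp fun r _ => ?_
      set t := (|r| + 1) / (⟪μ, x⟫ - (f x).toReal + z) with ht
      have htp : 0 < t := by positivity
      refine le_trans ?_ (le_iSup _ (t • x, t))
      have : perspective f (t • x, t) = ((t * (f x).toReal : ℝ) : EReal) := by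
        simp only [perspective, if_pos htp, smul_smul, inv_mul_cancel₀ htp.ne', one_smul]
        rw [← hc]; simp
      rw [this, ← EReal.coe_sub]
      refine EReal.coe_le_coe_iff.mpr ?_
      simp only [real_inner_smul_right]
      have e : t * (⟪μ, x⟫ - (f x).toReal + z) = |r| + 1 := by
        rw [ht, div_mul_cancel₀ _ hd.ne']
      have := le_abs_self r
      nlinarith
end
end

section
/- Let E be a real Hilbert space and f : E → ℝ be convex and Fréchet differentiable. Then for all s > 0 and x ∈ E, the perspective function f̃ is Fréchet differentiable at (x, s) with gradient ∇f̃(x, s) = (∇f(x/s), f(x/s) − ⟨∇f(x/s), x/s⟩). Moreover, if ∇f is continuous at x/s, then ∇f̃ is continuous at (x, s). -/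
open scoped Classical
open scoped RealInnerProductSpace

noncomputable section

variable {E : Type*} [NormedAddCommGroup E] [InnerProductSpace ℝ E]

/-- The (real-valued) perspective function `g(x,s) = s f(x/s)` for `s > 0` (junk value `0`
for `s ≤ 0`, which does not affect local statements at `s > 0`). -/
def perspectiveR (f : E → ℝ) (p : E × ℝ) : ℝ :=
  if 0 < p.2 then p.2 * f (p.2⁻¹ • p.1) else 0

/-- Differentiability of the perspective function: for convex Fréchet-differentiable `f`
and `s > 0`, `f̃` is Fréchet differentiable at `(x,s)` with gradient
`(∇f(x/s), f(x/s) - ⟨∇f(x/s), x/s⟩)`; if `∇f` is continuous at `x/s` then the gradient map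
of `f̃` is continuous at `(x,s)`. -/
theorem stmt9 [CompleteSpace E] (f : E → ℝ) (f' : E → E)
    (hconv : ConvexOn ℝ Set.univ f) (hdiff : ∀ y, HasGradientAt f (f' y) y) :
    ∀ (x : E) (s : ℝ), 0 < s →
      (HasFDerivAt (perspectiveR f)
        ((innerSL ℝ (f' (s⁻¹ • x))).comp (ContinuousLinearMap.fst ℝ E ℝ) +
          (f (s⁻¹ • x) - ⟪f' (s⁻¹ • x), s⁻¹ • x⟫) • ContinuousLinearMap.snd ℝ E ℝ)
        (x, s)) ∧
      (ContinuousAt f' (s⁻¹ • x) →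
        ContinuousAt (fun p : E × ℝ =>
          ((f' (p.2⁻¹ • p.1) : E),
            (f (p.2⁻¹ • p.1) - ⟪f' (p.2⁻¹ • p.1), p.2⁻¹ • p.1⟫ : ℝ))) (x, s)) := by
  intro x s hs
  have hne : s ≠ 0 := hs.ne'
  have hg : HasFDerivAt (fun p : E × ℝ => p.2⁻¹ • p.1)
      (s⁻¹ • ContinuousLinearMap.fst ℝ E ℝ +
        ((-(s ^ 2)⁻¹) • ContinuousLinearMap.snd ℝ E ℝ).smulRight x) (x, s) := by
    have h1 : HasFDerivAt (fun p : E × ℝ => p.2⁻¹)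
        ((-(s ^ 2)⁻¹) • ContinuousLinearMap.snd ℝ E ℝ) (x, s) :=
      (hasDerivAt_inv hne).comp_hasFDerivAt (x, s) (hasFDerivAt_snd (p := (x, s)))
    exact h1.smul (hasFDerivAt_fst (p := (x, s)))
  have hcont : ContinuousAt (fun p : E × ℝ => p.2⁻¹ • p.1) (x, s) := hg.continuousAt
  refine ⟨?_, ?_⟩
  · have hf := (hdiff (s⁻¹ • x)).hasFDerivAt
    have hfc := HasFDerivAt.comp (x, s) (f := fun p : E × ℝ => p.2⁻¹ • p.1) hf hg
    have hm := (hasFDerivAt_snd (𝕜 := ℝ) (p := (x, s))).mul hfc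
    have hev : perspectiveR f =ᶠ[nhds (x, s)]
        (fun p : E × ℝ => p.2 * (f ∘ fun p : E × ℝ => p.2⁻¹ • p.1) p) := by
      have : ∀ᶠ p : E × ℝ in nhds (x, s), 0 < p.2 :=
        continuousAt_snd.eventually (lt_mem_nhds hs)
      filter_upwards [this] with p hp
      simp [perspectiveR, hp]
    refine (hm.congr_of_eventuallyEq hev).congr_fderiv ?_
    ext p
    · simp [inner_smul_right, hne]
    · simp [inner_smul_right]
      field_simp
      ring
  · intro hc
    have h1 : ContinuousAt (fun p : E × ℝ => f' (p.2⁻¹ • p.1)) (x, s) :=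
      ContinuousAt.comp (f := fun p : E × ℝ => p.2⁻¹ • p.1) hc hcont
    have h2 : ContinuousAt (fun p : E × ℝ => f (p.2⁻¹ • p.1)) (x, s) :=
      ContinuousAt.comp (f := fun p : E × ℝ => p.2⁻¹ • p.1)
        (hdiff (s⁻¹ • x)).continuousAt hcont
    exact h1.prodMk (h2.sub (ContinuousAt.inner (𝕜 := ℝ) h1 hcont))
end
end

section
/- Let E be a real Hilbert space, β > 0, and let Ξ : E → ℝ ∪ {+∞} be proper, lower semicontinuous and β-strongly convex. Let Q ⊆ E be convex, let a ∈ dom ∂Ξ with w_a ∈ ∂Ξ(a), let b ∈ Q ∩ dom ∂Ξ with w_b ∈ ∂Ξ(b) and w_a − w_b ∈ N_Q(b) (the normal cone of Q at b), and let c ∈ Q ∩ dom Ξ. Then 0 ≤ B_Ξ(c, (b, w_b)) ≤ B_Ξ(c, (a, w_a)) − B_Ξ(b, (a, w_a)) ≤ B_Ξ(c, (a, w_a)) − (β/2)‖b − a‖². -/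
open scoped Classical
open scoped RealInnerProductSpace

noncomputable section

variable {E : Type*} [NormedAddCommGroup E] [InnerProductSpace ℝ E]

/-- The normal cone of a convex set `Q` at `b`. -/
def normalCone (Q : Set E) (b : E) : Set E := {ν : E | ∀ x ∈ Q, ⟪ν, x - b⟫ ≤ 0}

theorem strong_sub_aux (β : ℝ) (hβ : 0 < β) (Ξ : E → EReal) (hbot : ∀ x, Ξ x ≠ ⊥)
    (hsc : StronglyConvexE β Ξ) (a b wa : E) (hwa : ESubgradAt Ξ a wa) (A B : ℝ)
    (hA : Ξ a = (A : EReal)) (hB : Ξ b = (B : EReal)) :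
    β / 2 * ‖b - a‖ ^ 2 ≤ B - A - ⟪b - a, wa⟫ := by
  have h0 : A + ⟪wa, b - a⟫ ≤ B := by
    have := hwa b
    rw [hA, hB] at this
    exact_mod_cast this
  have key : ∀ t : ℝ, 0 < t → t < 1 →
      β / 2 * ‖b - a‖ ^ 2 * (1 - t) ≤ B - A - ⟪wa, b - a⟫ := by
    intro t ht ht1
    have h1 := hsc a b (1 - t) t (by linarith) ht (by ring)
    have h2 := hwa ((1 - t) • a + t • b)
    simp only [hA, hB] at h1 h2
    have hfin : Ξ ((1 - t) • a + t • b) ≠ ⊤ := by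
      intro h
      rw [h, EReal.top_sub_coe] at h1
      have h3 := top_le_iff.1 h1
      revert h3
      norm_cast
    obtain ⟨X, hX⟩ : ∃ X : ℝ, Ξ ((1 - t) • a + t • b) = (X : EReal) :=
      ⟨_, (EReal.coe_toReal hfin (hbot _)).symm⟩
    rw [hX] at h1 h2
    norm_cast at h1 h2
    have e1 : (1 - t) • a + t • b - a = t • (b - a) := by module
    rw [e1, inner_smul_right] at h2
    have e2 : ‖(1 - t) • a + t • b‖ ^ 2
        = (1 - t) * ‖a‖ ^ 2 + t * ‖b‖ ^ 2 - t * (1 - t) * ‖b - a‖ ^ 2 := by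
      rw [norm_add_sq_real, norm_sub_sq_real, inner_smul_left, inner_smul_right,
        norm_smul, norm_smul, mul_pow, mul_pow, real_inner_comm a b]
      simp only [Real.norm_eq_abs, sq_abs, conj_trivial]
      ring
    rw [e2] at h1
    refine le_of_mul_le_mul_left ?_ ht
    nlinarith
  rw [real_inner_comm]
  by_contra hcon
  push Not at hcon
  set K := β / 2 * ‖b - a‖ ^ 2 with hK
  set D := B - A - ⟪wa, b - a⟫ with hD
  have hD0 : 0 ≤ D := by linarith
  have hKp : 0 < K := by linarith
  have := key ((K - D) / (2 * K)) (div_pos (by linarith) (by linarith))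
    (by rw [div_lt_one (by linarith)]; linarith)
  have e : K * (1 - (K - D) / (2 * K)) = K - (K - D) / 2 := by field_simp
  linarith

/-- Key Bregman projection inequality: if `w_a ∈ ∂Ξ(a)`, `b ∈ Q` with `w_b ∈ ∂Ξ(b)` and
`w_a - w_b ∈ N_Q(b)`, then for every `c ∈ Q ∩ dom Ξ`,
`0 ≤ B_Ξ(c,(b,w_b)) ≤ B_Ξ(c,(a,w_a)) - B_Ξ(b,(a,w_a)) ≤ B_Ξ(c,(a,w_a)) - (β/2)‖b - a‖²`. -/
theorem stmt11 [CompleteSpace E] (β : ℝ) (hβ : 0 < β) (Ξ : E → EReal)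
    (hproper : EProper Ξ) (hlsc : LowerSemicontinuous Ξ) (hsc : StronglyConvexE β Ξ)
    (Q : Set E) (hQ : Convex ℝ Q)
    (a b c wa wb : E)
    (hwa : ESubgradAt Ξ a wa)
    (hbQ : b ∈ Q) (hwb : ESubgradAt Ξ b wb) (hnc : wa - wb ∈ normalCone Q b)
    (hcQ : c ∈ Q) (hcdom : Ξ c ≠ ⊤) :
    0 ≤ bregman Ξ c b wb ∧
    bregman Ξ c b wb ≤ bregman Ξ c a wa - bregman Ξ b a wa ∧
    bregman Ξ c a wa - bregman Ξ b a wa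
      ≤ bregman Ξ c a wa - ((β / 2 * ‖b - a‖ ^ 2 : ℝ) : EReal) := by
  have fin : ∀ x w, ESubgradAt Ξ x w → ∃ X : ℝ, Ξ x = (X : EReal) := by
    intro x w h
    refine ⟨_, (EReal.coe_toReal ?_ (hproper.1 _)).symm⟩
    intro hx
    have := h c
    rw [hx, EReal.top_add_coe] at this
    exact hcdom (top_le_iff.1 this)
  obtain ⟨A, hA⟩ := fin a wa hwa
  obtain ⟨B, hB⟩ := fin b wb hwb
  obtain ⟨C, hC⟩ : ∃ C : ℝ, Ξ c = (C : EReal) :=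
    ⟨_, (EReal.coe_toReal hcdom (hproper.1 _)).symm⟩
  have hs := strong_sub_aux β hβ Ξ hproper.1 hsc a b wa hwa A B hA hB
  have h1 := hwb c
  have h2 : ⟪wa - wb, c - b⟫ ≤ 0 := hnc c hcQ
  simp only [bregman, if_pos hwa, if_pos hwb, hA, hB, hC] at h1 ⊢
  norm_cast at h1 ⊢
  simp only [inner_sub_left, inner_sub_right] at *
  rw [real_inner_comm c wa, real_inner_comm b wa, real_inner_comm c wb,
    real_inner_comm b wb] at *
  refine ⟨?_, ?_, ?_⟩ <;> linarith
end
end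

section
/- Let (Δ^t)_{t ∈ ℕ} be a nonnegative nonincreasing real sequence, λ ∈ (0, 1), and C̄ > 0. Assume that for all natural numbers t₁ ≤ t₂ such that Δ^t ≥ (1 − λ)·Δ^{t₁} for every t ∈ [t₁, t₂], one has (t₂ − t₁ + 1)·((1 − λ)·Δ^{t₂})² ≤ C̄. Then for every T ∈ ℕ, (T + 1)·(Δ^T)² ≤ (C̄/(1 − λ)²)·(1 + 1/(λ(2 − λ))). In particular, Δ^T = O(1/√T). -/
/-- Abstract counting argument for the `O(1/√t)` rate of the Extended Level-Set method.
If `Δ` is nonnegative and nonincreasing, `λ ∈ (0,1)`, and every block `[t₁,t₂]` on which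
`Δ^t ≥ (1-λ)Δ^{t₁}` satisfies `(t₂ - t₁ + 1)((1-λ)Δ^{t₂})² ≤ C̄`, then
`(T+1)(Δ^T)² ≤ (C̄/(1-λ)²)(1 + 1/(λ(2-λ)))` for every `T`. -/
theorem stmt12 (Δ : ℕ → ℝ) (hnn : ∀ t, 0 ≤ Δ t) (hanti : Antitone Δ)
    (lam : ℝ) (hlam : lam ∈ Set.Ioo (0 : ℝ) 1) (Cbar : ℝ) (hC : 0 < Cbar)
    (hblock : ∀ t₁ t₂ : ℕ, t₁ ≤ t₂ →
      (∀ t : ℕ, t₁ ≤ t → t ≤ t₂ → (1 - lam) * Δ t₁ ≤ Δ t) →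
      ((t₂ : ℝ) - (t₁ : ℝ) + 1) * ((1 - lam) * Δ t₂) ^ 2 ≤ Cbar) :
    ∀ T : ℕ, ((T : ℝ) + 1) * (Δ T) ^ 2
      ≤ (Cbar / (1 - lam) ^ 2) * (1 + 1 / (lam * (2 - lam))) := by
  obtain ⟨h0, h1⟩ := hlam
  have hq : 0 < 1 - lam := by linarith
  have hd : 0 < lam * (2 - lam) := mul_pos h0 (by linarith)
  obtain ⟨K, hK⟩ : ∃ K, K = Cbar / (1 - lam) ^ 2 := ⟨_, rfl⟩
  obtain ⟨M, hM⟩ : ∃ M, M = K / (lam * (2 - lam)) := ⟨_, rfl⟩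
  have hMK : (1 - lam) ^ 2 * M + K = M := by
    have : M * (lam * (2 - lam)) = K := by rw [hM]; exact div_mul_cancel₀ K hd.ne'
    linarith [this, show (1 - lam) ^ 2 * M + M * (lam * (2 - lam)) = M by ring]
  have hb : ∀ s T : ℕ, s ≤ T → (1 - lam) * Δ s ≤ Δ T →
      ((T : ℝ) - s + 1) * (Δ T) ^ 2 ≤ K := by
    intro s T hs h
    have := hblock s T hs (fun t _ ht => h.trans (hanti ht))
    rw [hK, le_div_iff₀ (by positivity)]
    linarith [this, show ((T : ℝ) - s + 1) * ((1 - lam) * Δ T) ^ 2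
      = ((T : ℝ) - s + 1) * (Δ T) ^ 2 * (1 - lam) ^ 2 by ring]
  have hK0 : 0 < K := by rw [hK]; positivity
  have hM0 : 0 < M := by rw [hM]; positivity
  have key : ∀ T : ℕ, ∃ s : ℕ, s ≤ T ∧ (1 - lam) * Δ s ≤ Δ T ∧ (s : ℝ) * (Δ s) ^ 2 ≤ M := by
    intro T
    induction T with
    | zero =>
      refine ⟨0, le_rfl, ?_, ?_⟩
      · nlinarith [hnn 0]
      · simpa using hM0.le
    | succ T ih =>
      obtain ⟨s, hs, h2, h3⟩ := ih
      by_cases h : (1 - lam) * Δ s ≤ Δ (T + 1)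
      · exact ⟨s, by omega, h, h3⟩
      · push Not at h
        refine ⟨T + 1, le_rfl, ?_, ?_⟩
        · nlinarith [hnn (T + 1)]
        · have e1 := hb s T hs h2
          have hs' : (s : ℝ) ≤ T := by exact_mod_cast hs
          have e2 : (Δ (T + 1)) ^ 2 ≤ (Δ T) ^ 2 :=
            pow_le_pow_left₀ (hnn _) (hanti (Nat.le_succ T)) 2
          have e3 : (Δ (T + 1)) ^ 2 ≤ ((1 - lam) * Δ s) ^ 2 :=
            pow_le_pow_left₀ (hnn _) h.le 2
          have e4 := mul_le_mul_of_nonneg_left e2 (show (0 : ℝ) ≤ (T : ℝ) - s + 1 by linarith)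
          have e5 := mul_le_mul_of_nonneg_left e3 (show (0 : ℝ) ≤ (s : ℝ) by positivity)
          have e6 := mul_le_mul_of_nonneg_left h3 (show (0 : ℝ) ≤ (1 - lam) ^ 2 by positivity)
          push_cast
          rw [← hMK]
          linarith [show (s : ℝ) * ((1 - lam) * Δ s) ^ 2 = (1 - lam) ^ 2 * (s * Δ s ^ 2) by ring]
  intro T
  obtain ⟨s, hs, h2, h3⟩ := key T
  have e1 := hb s T hs h2
  have e2 : (Δ T) ^ 2 ≤ (Δ s) ^ 2 := pow_le_pow_left₀ (hnn _) (hanti hs) 2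
  have e3 := mul_le_mul_of_nonneg_left e2 (show (0 : ℝ) ≤ (s : ℝ) by positivity)
  rw [← hK, mul_add, mul_one, mul_one_div, ← hM]
  linarith
end

section
/- (Convergence of the Extended Level-Set method.) Let E be a real Hilbert space, ψ : E → ℝ ∪ {+∞} proper convex lower semicontinuous, E ⊆ E a nonempty closed convex set, Ξ : E → ℝ ∪ {+∞} proper lower semicontinuous and β-strongly convex for some β > 0, and λ ∈ (0,1). Let sequences (μ^t), (w^t), (v^t) in E, sets E^t ⊆ E, and reals h̄^t, h̲^t, Δ^t, ℓ^t be generated as follows: μ⁰ ∈ dom σ_E ∩ dom ∂Ξ ∩ dom ψ, w⁰ ∈ ∂Ξ(μ⁰), E^{−1} ⊆ E bounded with ψ + σ_{E^{−1}} coercive, h̄^{−1} = +∞; at each iteration t: v^t ∈ ∂σ_E(μ^t); h̄^t = min(h̄^{t−1}, ψ(μ^t) + σ_E(μ^t)); h̲^t = inf_{μ ∈ E} (ψ(μ) + σ_{E^{t−1} ∪ {v^t}}(μ)); E^t = E^{t−1} ∪ {v^t}; Δ^t = h̄^t − h̲^t; ℓ^t = λh̄^t + (1−λ)h̲^t; Q^t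 = {μ | ψ(μ) + σ_{E^t}(μ) ≤ ℓ^t}; μ^{t+1} is the minimizer of μ ↦ B_Ξ(μ, (μ^t, w^t)) over Q^t; and w^{t+1} ∈ ∂Ξ(μ^{t+1}) with w^t − w^{t+1} ∈ N_{Q^t}(μ^{t+1}). Assume: (H2) ∂σ_E(μ^t) ≠ ∅ for all t and ‖v^t‖ ≤ C_oracle for a constant C_oracle; (H4) the set Q^{−1} = {μ | ψ(μ) + σ_{E^{−1}}(μ) ≤ h̄⁰} is contained in dom Ξ and Ξ is bounded on Q^{−1}; (H5) such w^{t+1} exists at every iteration and ‖w^t‖ ≤ C_{∂Ξ} for a constant C_{∂Ξ}; (H6) |ψ(μ^{t+1}) − ψ(μ^t)| ≤ C_ψ ‖μ^{t+1} − μ^t‖ for a constant C_ψ. Then there exists C > 0 such that for all t ≥ 1, Δ^t ≤ C/√t. -/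
open scoped Classical
open scoped RealInnerProductSpace

noncomputable section

variable {E : Type*} [NormedAddCommGroup E] [InnerProductSpace ℝ E]

/-- The level set `Q^t = {μ | ψ(μ) + σ_{E^t}(μ) ≤ ℓ^t}` with
`ℓ^t = λ h̄^t + (1-λ) h̲^t`. -/
def levelSet (ψ : E → EReal) (ESet : ℕ → Set E) (lam : ℝ)
    (hbar hlow : ℕ → EReal) (t : ℕ) : Set E :=
  {ν : E | ψ ν + supportFn (ESet t) ν
    ≤ (lam : EReal) * hbar t + ((1 - lam : ℝ) : EReal) * hlow t}

lemma aux_rec (Δ : ℕ → ℝ) (q C0 : ℝ) (hq0 : 0 < q) (hq1 : q < 1) (hC0 : 0 ≤ C0)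
    (h0 : ∀ t, 0 ≤ Δ t)
    (hblock : ∀ s t, s ≤ t → q * Δ s < Δ t → ((t : ℝ) - s + 1) * (Δ t) ^ 2 ≤ C0) :
    ∀ t : ℕ, ((t : ℝ) + 1) * (Δ t) ^ 2 ≤ C0 / (1 - q ^ 2) := by
  have hq2 : 0 < 1 - q ^ 2 := by nlinarith
  have hK : 0 ≤ C0 / (1 - q ^ 2) := by positivity
  have hKe : q ^ 2 * (C0 / (1 - q ^ 2)) + C0 = C0 / (1 - q ^ 2) := by
    field_simp; ring
  set K := C0 / (1 - q ^ 2) with hKdef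
  intro t
  induction t using Nat.strong_induction_on with
  | _ t ih =>
    rcases (h0 t).eq_or_lt with hz | hpos
    · rw [← hz]; simpa using hK
    by_cases hall : ∃ s, s ≤ t ∧ Δ t ≤ q * Δ s
    · -- largest such s
      obtain ⟨s, ⟨hst, hs⟩, hmax⟩ : ∃ s, (s ≤ t ∧ Δ t ≤ q * Δ s) ∧
          ∀ r, r ≤ t → s < r → q * Δ r < Δ t := by
        obtain ⟨s0, hs0⟩ := hall
        refine ⟨Nat.findGreatest (fun s => s ≤ t ∧ Δ t ≤ q * Δ s) t,
          Nat.findGreatest_spec (P := fun s => s ≤ t ∧ Δ t ≤ q * Δ s) hs0.1 hs0, ?_⟩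
        intro r hr hlt
        by_contra hcon
        exact Nat.findGreatest_is_greatest hlt hr ⟨hr, not_lt.mp hcon⟩
      have hne : s ≠ t := by
        rintro rfl
        nlinarith
      have hlt : s < t := lt_of_le_of_ne hst hne
      have h1 := ih s hlt
      have h2 := hblock (s + 1) t hlt (hmax _ hlt (Nat.lt_succ_self s))
      push_cast at h2
      have h3 : (Δ t) ^ 2 ≤ q ^ 2 * (Δ s) ^ 2 := by
        rw [← mul_pow]; exact pow_le_pow_left₀ hpos.le hs 2
      have h4 : ((s : ℝ) + 1) * (Δ t) ^ 2 ≤ ((s : ℝ) + 1) * (q ^ 2 * (Δ s) ^ 2) :=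
        mul_le_mul_of_nonneg_left h3 (by positivity)
      have h5 : q ^ 2 * (((s : ℝ) + 1) * (Δ s) ^ 2) ≤ q ^ 2 * K :=
        mul_le_mul_of_nonneg_left h1 (by positivity)
      nlinarith
    · push Not at hall
      have h2 := hblock 0 t (Nat.zero_le _) (hall 0 (Nat.zero_le _))
      push_cast at h2
      have : 0 ≤ q ^ 2 * K := by positivity
      linarith

lemma aux_core {H : Type*} [NormedAddCommGroup H] [InnerProductSpace ℝ H]
    (μ w : ℕ → H) (Δ : ℕ → ℝ) (S : Set H) (X : H → ℝ) (q L β CX R Cw : ℝ)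
    (hq0 : 0 < q) (hq1 : q < 1) (hL : 0 < L) (hβ : 0 < β)
    (h0 : ∀ t, 0 ≤ Δ t) (hanti : Antitone Δ)
    (hstep : ∀ t, q * Δ t ≤ L * ‖μ (t + 1) - μ t‖)
    (hX : ∀ x ∈ S, |X x| ≤ CX) (hR : ∀ x ∈ S, ‖x‖ ≤ R) (hμ : ∀ t, μ t ∈ S)
    (hw : ∀ t, ‖w t‖ ≤ Cw)
    (hstrong : ∀ t, β / 2 * ‖μ (t + 1) - μ t‖ ^ 2 ≤
      X (μ (t + 1)) - X (μ t) - ⟪w t, μ (t + 1) - μ t⟫)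
    (hsub : ∀ t, ∀ u ∈ S, X (μ t) + ⟪w t, u - μ t⟫ ≤ X u)
    (hex : ∀ s t, s ≤ t → q * Δ s < Δ t → ∃ u ∈ S, ∀ r, s ≤ r → r ≤ t →
      ⟪w r - w (r + 1), u - μ (r + 1)⟫ ≤ 0) :
    ∃ C : ℝ, 0 < C ∧ ∀ t : ℕ, 1 ≤ t → Δ t ≤ C / Real.sqrt t := by
  have hCX : 0 ≤ CX := (abs_nonneg _).trans (hX _ (hμ 0))
  have hR0 : 0 ≤ R := (norm_nonneg _).trans (hR _ (hμ 0))
  have hCw : 0 ≤ Cw := (norm_nonneg _).trans (hw 0)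
  set D := 2 * CX + Cw * (2 * R) with hD
  have hD0 : 0 ≤ D := by positivity
  set c := β / 2 * (q / L) ^ 2 with hc
  have hc0 : 0 < c := by positivity
  have hblock : ∀ s t, s ≤ t → q * Δ s < Δ t → ((t : ℝ) - s + 1) * (Δ t) ^ 2 ≤ D / c := by
    intro s t hst hlt
    obtain ⟨u, huS, hu⟩ := hex s t hst hlt
    -- Bregman distance to u
    set B : ℕ → ℝ := fun r => X u - X (μ r) - ⟪w r, u - μ r⟫ with hB
    have hdec : ∀ r, s ≤ r → r ≤ t → B (r + 1) + c * (Δ t) ^ 2 ≤ B r := by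
      intro r hsr hrt
      have h1 := hu r hsr hrt
      have h2 := hstrong r
      have h3 : q / L * Δ t ≤ ‖μ (r + 1) - μ r‖ := by
        have := hstep r
        have h4 : q * Δ t ≤ q * Δ r := mul_le_mul_of_nonneg_left (hanti hrt) hq0.le
        rw [div_mul_eq_mul_div, div_le_iff₀ hL]
        linarith
      have h4 : (q / L * Δ t) ^ 2 ≤ ‖μ (r + 1) - μ r‖ ^ 2 :=
        pow_le_pow_left₀ (mul_nonneg (by positivity) (h0 t)) h3 2
      have h5 : c * (Δ t) ^ 2 ≤ β / 2 * ‖μ (r + 1) - μ r‖ ^ 2 := by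
        have : c * (Δ t) ^ 2 = β / 2 * (q / L * Δ t) ^ 2 := by rw [hc]; ring
        rw [this]
        exact mul_le_mul_of_nonneg_left h4 (by positivity)
      simp only [hB]
      simp only [inner_sub_left, inner_sub_right] at h1 h2 ⊢
      linarith
    have hsum : ∀ k : ℕ, s + k ≤ t + 1 → B (s + k) + k * (c * (Δ t) ^ 2) ≤ B s := by
      intro k
      induction k with
      | zero => intro _; simp
      | succ k ih =>
        intro hk
        have h1 := ih (by omega)
        have h2 := hdec (s + k) (by omega) (by omega)
        push_cast
        rw [← add_assoc s k 1]
        linarith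
    have h1 := hsum (t + 1 - s) (by omega)
    have h2 : 0 ≤ B (s + (t + 1 - s)) := by
      have := hsub (s + (t + 1 - s)) u huS
      simp only [hB]; linarith
    have h3 : B s ≤ D := by
      have e1 := abs_le.mp (hX u huS)
      have e2 := abs_le.mp (hX _ (hμ s))
      have e3 : |⟪w s, u - μ s⟫| ≤ Cw * (2 * R) := by
        refine (abs_real_inner_le_norm _ _).trans ?_
        refine mul_le_mul (hw s) ?_ (norm_nonneg _) hCw
        refine (norm_sub_le _ _).trans ?_
        linarith [hR u huS, hR _ (hμ s)]
      have e4 := abs_le.mp e3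
      simp only [hB]; linarith [e1.2, e2.1, e4.1]
    have h4 : ((t + 1 - s : ℕ) : ℝ) = (t : ℝ) - s + 1 := by
      rw [Nat.cast_sub (by omega)]; push_cast; ring
    rw [h4] at h1
    rw [le_div_iff₀ hc0]
    nlinarith
  have hrec := aux_rec Δ q (D / c) hq0 hq1 (by positivity) h0 hblock
  have hq2 : 0 < 1 - q ^ 2 := by nlinarith
  set K := D / c / (1 - q ^ 2) with hK
  have hK0 : 0 ≤ K := by positivity
  refine ⟨Real.sqrt (K + 1), by positivity, ?_⟩
  intro t ht
  have htp : (0 : ℝ) < t := by exact_mod_cast ht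
  rw [le_div_iff₀ (Real.sqrt_pos.mpr htp)]
  apply Real.le_sqrt_of_sq_le
  rw [mul_pow, Real.sq_sqrt htp.le]
  nlinarith [hrec t, sq_nonneg (Δ t)]

lemma aux_strong {H : Type*} [NormedAddCommGroup H] [InnerProductSpace ℝ H]
    (Ξ : H → EReal) (hb : ∀ x, Ξ x ≠ ⊥) (β : ℝ) (hsc : StronglyConvexE β Ξ)
    (x y w : H) (a b : ℝ) (hx : Ξ x = a) (hy : Ξ y = b) (hw : ESubgradAt Ξ x w) :
    β / 2 * ‖y - x‖ ^ 2 ≤ b - a - ⟪w, y - x⟫ := by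
  have key : ∀ s : ℝ, 0 < s → s < 1 → (1 - s) * (β / 2 * ‖y - x‖ ^ 2) ≤ b - a - ⟪w, y - x⟫ := by
    intro s hs hs1
    have h1 := hsc x y (1 - s) s (by linarith) hs (by ring)
    have h2 := hw ((1 - s) • x + s • y)
    simp only [hx, hy] at h1 h2
    have h3 : Ξ ((1 - s) • x + s • y) ≠ ⊤ := by
      intro h
      rw [h, EReal.top_sub_coe] at h1
      have : ((1 - s : ℝ) : EReal) * ((a : EReal) - ((β / 2 * ‖x‖ ^ 2 : ℝ) : EReal))
        + (s : EReal) * ((b : EReal) - ((β / 2 * ‖y‖ ^ 2 : ℝ) : EReal)) =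
        (((1 - s) * (a - β / 2 * ‖x‖ ^ 2) + s * (b - β / 2 * ‖y‖ ^ 2) : ℝ) : EReal) := by
        push_cast; rfl
      rw [this] at h1
      exact absurd (top_le_iff.mp h1) (EReal.coe_ne_top _)
    lift Ξ ((1 - s) • x + s • y) to ℝ using ⟨h3, hb _⟩ with z
    norm_cast at h1 h2
    have e1 : (1 - s) • x + s • y - x = s • (y - x) := by module
    rw [e1, inner_smul_right] at h2
    have e2 : ‖(1 - s) • x + s • y‖ ^ 2 = (1 - s) * ‖x‖ ^ 2 + s * ‖y‖ ^ 2
        - s * (1 - s) * ‖y - x‖ ^ 2 := by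
      simp only [← real_inner_self_eq_norm_sq, inner_add_left, inner_add_right,
        inner_sub_left, inner_sub_right, real_inner_smul_left, real_inner_smul_right,
        real_inner_comm x y]
      ring
    rw [e2] at h1
    have h5 : s * ((1 - s) * (β / 2 * ‖y - x‖ ^ 2)) ≤ s * (b - a - ⟪w, y - x⟫) := by
      nlinarith
    exact le_of_mul_le_mul_left h5 hs
  have hlim : Filter.Tendsto (fun s : ℝ => (1 - s) * (β / 2 * ‖y - x‖ ^ 2))
      (nhdsWithin 0 (Set.Ioi 0)) (nhds ((1 - 0) * (β / 2 * ‖y - x‖ ^ 2))) := by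
    apply Filter.Tendsto.mono_left _ nhdsWithin_le_nhds
    exact Continuous.tendsto (by fun_prop) 0
  rw [sub_zero, one_mul] at hlim
  refine le_of_tendsto hlim ?_
  filter_upwards [Ioo_mem_nhdsGT (show (0 : ℝ) < 1 by norm_num)] with s hs
  exact key s hs.1 hs.2

lemma supp_mono {H : Type*} [NormedAddCommGroup H] [InnerProductSpace ℝ H]
    {A B : Set H} (h : A ⊆ B) (ν : H) : supportFn A ν ≤ supportFn B ν :=
  iSup_le fun x => le_iSup (fun x : B => ((⟪ν, (x : H)⟫ : ℝ) : EReal)) ⟨x.1, h x.2⟩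

lemma le_supp {H : Type*} [NormedAddCommGroup H] [InnerProductSpace ℝ H]
    {A : Set H} {x : H} (h : x ∈ A) (ν : H) : ((⟪ν, x⟫ : ℝ) : EReal) ≤ supportFn A ν :=
  le_iSup (fun x : A => ((⟪ν, (x : H)⟫ : ℝ) : EReal)) ⟨x, h⟩

lemma supp_ne_bot {H : Type*} [NormedAddCommGroup H] [InnerProductSpace ℝ H]
    {A : Set H} (h : A.Nonempty) (ν : H) : supportFn A ν ≠ ⊥ := by
  obtain ⟨x, hx⟩ := h
  intro hb
  have := le_supp hx ν
  rw [hb] at this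
  exact EReal.coe_ne_bot _ (le_bot_iff.mp this)

lemma supp_sub {H : Type*} [NormedAddCommGroup H] [InnerProductSpace ℝ H]
    {A : Set H} (hA : A.Nonempty) (m v : H) (hv : ESubgradAt (supportFn A) m v) :
    supportFn A m = ((⟪m, v⟫ : ℝ) : EReal) ∧
      ∀ ν, ((⟪ν, v⟫ : ℝ) : EReal) ≤ supportFn A ν := by
  have hs0 : supportFn A 0 ≤ 0 := iSup_le fun x => by simp
  have htop : supportFn A m ≠ ⊤ := by
    intro h
    have h1 := hv 0
    rw [h, EReal.top_add_coe] at h1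
    exact absurd (h1.trans hs0) (by simp)
  have hcoe : ∃ a : ℝ, supportFn A m = a :=
    ⟨_, (EReal.coe_toReal htop (supp_ne_bot hA m)).symm⟩
  obtain ⟨a, ha⟩ := hcoe
  have hle : ∀ ν, ((⟪ν, v⟫ : ℝ) : EReal) ≤ supportFn A ν := by
    intro ν
    by_cases hν : supportFn A ν = ⊤
    · rw [hν]; exact le_top
    obtain ⟨b, hb⟩ : ∃ b : ℝ, supportFn A ν = b :=
      ⟨_, (EReal.coe_toReal hν (supp_ne_bot hA ν)).symm⟩
    have h1 := hv (m + ν)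
    have h2 : supportFn A (m + ν) ≤ ((a + b : ℝ) : EReal) := by
      refine iSup_le fun x => ?_
      have e1 := le_supp x.2 m
      have e2 := le_supp x.2 ν
      rw [ha] at e1
      rw [hb] at e2
      norm_cast at e1 e2 ⊢
      rw [inner_add_left]; linarith
    have h3 := h1.trans h2
    rw [ha] at h3
    rw [hb]
    norm_cast at h3 ⊢
    rw [add_sub_cancel_left, real_inner_comm] at h3
    linarith
  refine ⟨le_antisymm ?_ (hle m), hle⟩
  have h1 := (hv 0).trans hs0
  rw [ha] at h1 ⊢
  norm_cast at h1 ⊢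
  rw [zero_sub, inner_neg_right, real_inner_comm] at h1
  linarith

/-- Convergence of the Extended Level-Set method: under assumptions (H2), (H4), (H5), (H6),
the primal-dual gap `Δ^t = h̄^t - h̲^t` decays like `O(1/√t)`. -/
theorem stmt13 {H : Type*} [NormedAddCommGroup H] [InnerProductSpace ℝ H] [CompleteSpace H]
    -- data of the problem
    (ψ : H → EReal) (hψproper : EProper ψ) (hψconv : EConvexOn ψ)
    (hψlsc : LowerSemicontinuous ψ)
    (Eb : Set H) (hEbne : Eb.Nonempty) (hEbcl : IsClosed Eb) (hEbconv : Convex ℝ Eb)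
    (Ξ : H → EReal) (hΞproper : EProper Ξ) (hΞlsc : LowerSemicontinuous Ξ)
    (β : ℝ) (hβ : 0 < β) (hΞsc : StronglyConvexE β Ξ)
    (lam : ℝ) (hlam : lam ∈ Set.Ioo (0 : ℝ) 1)
    -- iterates of the algorithm
    (μ w v : ℕ → H) (ESet : ℕ → Set H) (Einit : Set H) (hbar hlow : ℕ → EReal)
    -- initialization
    (hμ0dom : supportFn Eb (μ 0) ≠ ⊤ ∧ ψ (μ 0) ≠ ⊤)
    (hw0 : ESubgradAt Ξ (μ 0) (w 0))
    (hEinit_sub : Einit ⊆ Eb) (hEinit_bdd : Bornology.IsBounded Einit)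
    (hEinit_coer : ECoercive (fun ν => ψ ν + supportFn Einit ν))
    -- the iteration rules
    (hv : ∀ t, ESubgradAt (supportFn Eb) (μ t) (v t))
    (hESet0 : ESet 0 = Einit ∪ {v 0})
    (hESetS : ∀ t, ESet (t + 1) = ESet t ∪ {v (t + 1)})
    (hbar0 : hbar 0 = ψ (μ 0) + supportFn Eb (μ 0))
    (hbarS : ∀ t, hbar (t + 1) = min (hbar t) (ψ (μ (t + 1)) + supportFn Eb (μ (t + 1))))
    (hlowdef : ∀ t, hlow t = ⨅ ν : H, ψ ν + supportFn (ESet t) ν)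
    (hμS : ∀ t, μ (t + 1) ∈ levelSet ψ ESet lam hbar hlow t ∧
      ∀ ν ∈ levelSet ψ ESet lam hbar hlow t,
        bregman Ξ (μ (t + 1)) (μ t) (w t) ≤ bregman Ξ ν (μ t) (w t))
    (hwS : ∀ t, ESubgradAt Ξ (μ (t + 1)) (w (t + 1)) ∧
      w t - w (t + 1) ∈ normalCone (levelSet ψ ESet lam hbar hlow t) (μ (t + 1)))
    -- assumption (H2)
    (H2 : ∃ Cor : ℝ, ∀ t, ‖v t‖ ≤ Cor)
    -- assumption (H4): `Q^{-1} = {ψ + σ_{E^{-1}} ≤ h̄⁰} ⊆ dom Ξ` and `Ξ` bounded on it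
    (H4 : (∀ ν : H, ψ ν + supportFn Einit ν ≤ hbar 0 → Ξ ν ≠ ⊤) ∧
      ∃ CΞ : ℝ, ∀ ν : H, ψ ν + supportFn Einit ν ≤ hbar 0 →
        -((CΞ : EReal)) ≤ Ξ ν ∧ Ξ ν ≤ (CΞ : EReal))
    -- assumption (H5)
    (H5 : ∃ Cw : ℝ, ∀ t, ‖w t‖ ≤ Cw)
    -- assumption (H6)
    (H6 : ∃ Cψ : ℝ, ∀ t,
      ψ (μ (t + 1)) - ψ (μ t) ≤ ((Cψ * ‖μ (t + 1) - μ t‖ : ℝ) : EReal) ∧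
      ψ (μ t) - ψ (μ (t + 1)) ≤ ((Cψ * ‖μ (t + 1) - μ t‖ : ℝ) : EReal)) :
    ∃ C : ℝ, 0 < C ∧ ∀ t : ℕ, 1 ≤ t →
      hbar t - hlow t ≤ ((C / Real.sqrt t : ℝ) : EReal) := by
  obtain ⟨Cor, H2⟩ := H2
  obtain ⟨H4a, CΞ, H4b⟩ := H4
  obtain ⟨Cw, H5⟩ := H5
  obtain ⟨Cψ, H6⟩ := H6
  obtain ⟨hl0, hl1⟩ := hlam
  have hσ := fun t => supp_sub hEbne (μ t) (v t) (hv t)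
  have hvmem : ∀ t, v t ∈ ESet t := by
    intro t
    cases t with
    | zero => rw [hESet0]; exact Or.inr rfl
    | succ t => rw [hESetS]; exact Or.inr rfl
  have hEmono : Monotone ESet := monotone_nat_of_le_succ fun t => by
    rw [hESetS]; exact Set.subset_union_left
  have hEinit_le : ∀ t, Einit ⊆ ESet t := fun t =>
    (show Einit ⊆ ESet 0 by rw [hESet0]; exact Set.subset_union_left).trans
      (hEmono (Nat.zero_le t))
  -- supports of the bundles stay below the support of `Eb`
  have hElt : ∀ t ν, supportFn (ESet t) ν ≤ supportFn Eb ν := by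
    intro t ν
    induction t with
    | zero =>
      refine iSup_le ?_
      rintro ⟨x, hx⟩
      rw [hESet0] at hx
      rcases hx with hx | hx
      · exact le_supp (hEinit_sub hx) ν
      · rw [Set.mem_singleton_iff] at hx
        subst hx
        exact (hσ 0).2 ν
    | succ t ih =>
      refine iSup_le ?_
      rintro ⟨x, hx⟩
      rw [hESetS] at hx
      rcases hx with hx | hx
      · exact (le_supp hx ν).trans ih
      · rw [Set.mem_singleton_iff] at hx
        subst hx
        exact (hσ (t + 1)).2 ν
  have hEbot : ∀ t ν, supportFn (ESet t) ν ≠ ⊥ := fun t ν => supp_ne_bot ⟨_, hvmem t⟩ ν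
  have hbar_ge : ∀ B : EReal, (∀ ν, B ≤ ψ ν + supportFn Eb ν) → ∀ t, B ≤ hbar t := by
    intro B hB t
    induction t with
    | zero => rw [hbar0]; exact hB _
    | succ t ih => rw [hbarS]; exact le_min ih (hB _)
  have hbar_anti : Antitone hbar := antitone_nat_of_succ_le fun t => by
    rw [hbarS]; exact min_le_left _ _
  have hlow_mono : Monotone hlow := by
    intro s t hst
    rw [hlowdef, hlowdef]
    exact iInf_mono fun ν => add_le_add le_rfl (supp_mono (hEmono hst) ν)
  have hlow_le : ∀ t, hlow t ≤ hbar t := by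
    intro t
    refine hbar_ge _ (fun ν => ?_) t
    rw [hlowdef]
    exact (iInf_le _ ν).trans (add_le_add le_rfl (hElt t ν))
  have hbar_top : ∀ t, hbar t ≠ ⊤ := by
    intro t h
    have h1 := hbar_anti (Nat.zero_le t)
    rw [h, hbar0, top_le_iff] at h1
    exact EReal.add_ne_top hμ0dom.2 hμ0dom.1 h1
  have hlow_bot : ∀ t, hlow t ≠ ⊥ := by
    intro t h
    have h1 := (hμS t).1
    simp only [levelSet, Set.mem_setOf_eq] at h1
    rw [h, EReal.coe_mul_bot_of_pos (by linarith), EReal.add_bot, le_bot_iff,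
      EReal.add_eq_bot_iff] at h1
    rcases h1 with h1 | h1
    · exact hψproper.1 _ h1
    · exact hEbot _ _ h1
  have hex1 : ∀ t, ∃ a : ℝ, hbar t = a := fun t =>
    ⟨_, (EReal.coe_toReal (hbar_top t)
      (fun h => hlow_bot t (le_bot_iff.mp (h ▸ hlow_le t)))).symm⟩
  have hex2 : ∀ t, ∃ a : ℝ, hlow t = a := fun t =>
    ⟨_, (EReal.coe_toReal (fun h => hbar_top t (top_le_iff.mp (h ▸ hlow_le t)))
      (hlow_bot t)).symm⟩
  choose hb hhb using hex1
  choose hl hhl using hex2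
  have hbanti : Antitone hb := fun s t h => by
    have := hbar_anti h
    rw [hhb, hhb] at this; exact_mod_cast this
  have hlmono : Monotone hl := fun s t h => by
    have := hlow_mono h
    rw [hhl, hhl] at this; exact_mod_cast this
  have hlb : ∀ t, hl t ≤ hb t := fun t => by
    have := hlow_le t
    rw [hhb, hhl] at this; exact_mod_cast this
  have hlev : ∀ t ν, ν ∈ levelSet ψ ESet lam hbar hlow t ↔
      ψ ν + supportFn (ESet t) ν ≤ ((lam * hb t + (1 - lam) * hl t : ℝ) : EReal) := by
    intro t ν
    simp only [levelSet, Set.mem_setOf_eq, hhb, hhl]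
    push_cast
    rfl
  have hψtop : ∀ t, ψ (μ t) ≠ ⊤ := by
    intro t
    cases t with
    | zero => exact hμ0dom.2
    | succ t =>
      intro h
      have h1 := (hlev _ _).mp (hμS t).1
      rw [h, EReal.top_add_of_ne_bot (hEbot _ _), top_le_iff] at h1
      exact EReal.coe_ne_top _ h1
  have hex3 : ∀ t, ∃ a : ℝ, ψ (μ t) = a := fun t =>
    ⟨_, (EReal.coe_toReal (hψtop t) (hψproper.1 _)).symm⟩
  choose p hp using hex3
  set S : Set H := {ν | ψ ν + supportFn Einit ν ≤ hbar 0} with hS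
  have hlevS : ∀ t ν, ν ∈ levelSet ψ ESet lam hbar hlow t → ν ∈ S := by
    intro t ν hν
    have h1 := (hlev _ _).mp hν
    have h2 : lam * hb t + (1 - lam) * hl t ≤ hb 0 := by
      have := hbanti (Nat.zero_le t)
      nlinarith [hlb t]
    show ψ ν + supportFn Einit ν ≤ hbar 0
    rw [hhb]
    exact ((add_le_add le_rfl (supp_mono (hEinit_le t) ν)).trans h1).trans
      (by exact_mod_cast h2)
  have hμmem : ∀ t, μ t ∈ S := by
    intro t
    cases t with
    | zero =>
      show ψ (μ 0) + supportFn Einit (μ 0) ≤ hbar 0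
      rw [hbar0]
      exact add_le_add le_rfl (supp_mono hEinit_sub _)
    | succ t => exact hlevS t _ (hμS t).1
  have hwsub : ∀ t, ESubgradAt Ξ (μ t) (w t) := by
    intro t
    cases t with
    | zero => exact hw0
    | succ t => exact (hwS t).1
  have hΞS : ∀ ν ∈ S, Ξ ν = ((Ξ ν).toReal : EReal) := fun ν hν =>
    (EReal.coe_toReal (H4a ν hν) (hΞproper.1 ν)).symm
  obtain ⟨R, hR⟩ := hEinit_coer (hb 0 + 1)
  have hSR : ∀ x ∈ S, ‖x‖ ≤ R := by
    intro x hx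
    by_contra hcon
    have h1 := (hR x (not_le.mp hcon).le).trans hx
    rw [hhb] at h1
    norm_cast at h1
    linarith
  have hstep : ∀ t, (1 - lam) * (hb t - hl t) ≤ (|Cψ| + |Cor| + 1) * ‖μ (t + 1) - μ t‖ := by
    intro t
    have h1 := (hlev _ _).mp (hμS t).1
    have h2 := (add_le_add (le_refl (ψ (μ (t + 1)))) (le_supp (hvmem t) (μ (t + 1)))).trans h1
    have h3 : hbar t ≤ ψ (μ t) + supportFn Eb (μ t) := by
      cases t with
      | zero => exact hbar0.le
      | succ t => rw [hbarS]; exact min_le_right _ _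
    have h4 := (H6 t).2
    rw [hhb, hp, (hσ t).1] at h3
    rw [hp] at h2
    rw [hp, hp] at h4
    norm_cast at h2 h3 h4
    have h5 : ⟪μ t, v t⟫ - ⟪μ (t + 1), v t⟫ ≤ |Cor| * ‖μ (t + 1) - μ t‖ := by
      rw [← inner_sub_left]
      refine (real_inner_le_norm _ _).trans ?_
      rw [norm_sub_rev, mul_comm]
      exact mul_le_mul_of_nonneg_right ((H2 t).trans (le_abs_self _)) (norm_nonneg _)
    have h6 : Cψ * ‖μ (t + 1) - μ t‖ ≤ |Cψ| * ‖μ (t + 1) - μ t‖ :=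
      mul_le_mul_of_nonneg_right (le_abs_self _) (norm_nonneg _)
    nlinarith [norm_nonneg (μ (t + 1) - μ t)]
  obtain ⟨C, hC, hfin⟩ := aux_core μ w (fun t => hb t - hl t) S (fun x => (Ξ x).toReal)
    (1 - lam) (|Cψ| + |Cor| + 1) β CΞ R Cw (by linarith) (by linarith) (by positivity) hβ
    (fun t => sub_nonneg.mpr (hlb t))
    (fun s t h => sub_le_sub (hbanti h) (hlmono h)) hstep
    (by
      intro x hx
      have h1 := H4b x hx
      rw [hΞS x hx] at h1
      rw [abs_le]
      exact ⟨by exact_mod_cast h1.1, by exact_mod_cast h1.2⟩)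
    hSR hμmem H5
    (fun t => aux_strong Ξ hΞproper.1 β hΞsc _ _ _ _ _ (hΞS _ (hμmem t))
      (hΞS _ (hμmem (t + 1))) (hwsub t))
    (by
      intro t u hu
      have h1 := hwsub t u
      rw [hΞS _ hu, hΞS _ (hμmem t)] at h1
      exact_mod_cast h1)
    (by
      intro s t hst hlt
      have h1 : hlow t < ((hb t - (1 - lam) * (hb s - hl s) : ℝ) : EReal) := by
        rw [hhl]
        norm_cast
        linarith
      rw [hlowdef, iInf_lt_iff] at h1
      obtain ⟨u, hu⟩ := h1
      have hmem : ∀ r, s ≤ r → r ≤ t → u ∈ levelSet ψ ESet lam hbar hlow r := by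
        intro r hsr hrt
        rw [hlev]
        refine ((add_le_add le_rfl (supp_mono (hEmono hrt) u)).trans hu.le).trans ?_
        have e1 := hbanti hrt
        have e2 := hbanti hsr
        have e3 := hlmono hsr
        norm_cast
        nlinarith
      exact ⟨u, hlevS s u (hmem s le_rfl hst), fun r hsr hrt => (hwS r).2 u (hmem r hsr hrt)⟩)
  refine ⟨C, hC, fun t ht => ?_⟩
  have := hfin t ht
  rw [hhb, hhl]
  exact_mod_cast this
end
end

section
/- Let E₁ and E₂ be real Hilbert spaces, β > 0, f : E₁ → ℝ convex and Fréchet differentiable with β-Lipschitz gradient, A : E₁ → E₂ a bounded linear operator, b ∈ E₂, and Q = Q₁ + Q₂ ⊆ E₂ where Q₁ is nonempty closed convex bounded and Q₂ is a closed convex cone. Let K^{−1} ⊆ E₁ be a compact set such that −b lies in the interior of Q₂^⊖ − A(cloconv K^{−1}), where Q₂^⊖ = {x₂ ∈ E₂ | ⟨μ₂, x₂⟩ ≤ 0 for all μ₂ ∈ Q₂} and cloconv denotes closed convex hull. Define E^{−1} = {(x₁, A x₁) | x₁ ∈ −K^{−1}} ⊆ E₁ × E₂ and ψ : E₁ ×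 E₂ → ℝ ∪ {+∞} by ψ(μ₁, μ₂) = f*(μ₁) + ⟨μ₂, b⟩ if μ₂ ∈ Q and +∞ otherwise. Then E^{−1} is bounded and the function μ ↦ ψ(μ) + σ_{E^{−1}}(μ) is coercive on E₁ × E₂. -/
open scoped Classical
open scoped RealInnerProductSpace

noncomputable section

variable {E : Type*} [NormedAddCommGroup E] [InnerProductSpace ℝ E]

/-- Fenchel conjugate of a real-valued function, with values in `EReal`. -/
def fenchelR (f : E → ℝ) (μ : E) : EReal := ⨆ x : E, ((⟪μ, x⟫ - f x : ℝ) : EReal)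

/-- Support function of a subset of a product of Hilbert spaces, for the canonical inner
product of the product. -/
def supportProd {E₁ E₂ : Type*} [NormedAddCommGroup E₁] [InnerProductSpace ℝ E₁]
    [NormedAddCommGroup E₂] [InnerProductSpace ℝ E₂]
    (C : Set (E₁ × E₂)) (μ : E₁ × E₂) : EReal :=
  ⨆ x : C, ((⟪μ.1, (x : E₁ × E₂).1⟫ + ⟪μ.2, (x : E₁ × E₂).2⟫ : ℝ) : EReal)

lemma aux_unit {F : Type*} [NormedAddCommGroup F] [InnerProductSpace ℝ F] (r : ℝ) (hr : 0 ≤ r)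
    (x : F) : ∃ u : F, ‖u‖ ≤ r ∧ ⟪x, u⟫ = r * ‖x‖ := by
  by_cases hx : x = 0
  · exact ⟨0, by simpa using hr, by simp [hx]⟩
  · have hn : ‖x‖ ≠ 0 := norm_ne_zero_iff.mpr hx
    refine ⟨(r / ‖x‖) • x, ?_, ?_⟩
    · rw [norm_smul, norm_div, norm_norm, Real.norm_of_nonneg hr, div_mul_cancel₀ _ hn]
    · rw [real_inner_smul_right, real_inner_self_eq_norm_sq]
      field_simp

lemma aux_bdd {F : Type*} [NormedAddCommGroup F] [InnerProductSpace ℝ F] [CompleteSpace F]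
    (β : ℝ) (hβ : 0 < β) (f : F → ℝ) (f' : F → F)
    (hfdiff : ∀ x, HasGradientAt f (f' x) x) (hflip : LipschitzWith β.toNNReal f') (ρ : ℝ) :
    ∃ C : ℝ, ∀ y, ‖y‖ ≤ ρ → f y ≤ C := by
  refine ⟨f 0 + (‖f' 0‖ + β * ρ) * ρ, fun y hy => ?_⟩
  have hρ : 0 ≤ ρ := (norm_nonneg y).trans hy
  have hb : ∀ x ∈ Metric.closedBall (0 : F) ρ,
      ‖(InnerProductSpace.toDual ℝ F (f' x) : StrongDual ℝ F)‖ ≤ ‖f' 0‖ + β * ρ := by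
    intro x hx
    rw [LinearIsometryEquiv.norm_map]
    have h1 := hflip.norm_sub_le x 0
    rw [Real.coe_toNNReal _ hβ.le, sub_zero] at h1
    have h2 : ‖x‖ ≤ ρ := by simpa using hx
    have h3 : ‖f' x‖ ≤ ‖f' 0‖ + ‖f' x - f' 0‖ := by
      have := norm_add_le (f' 0) (f' x - f' 0)
      simpa using this
    have h4 : β * ‖x‖ ≤ β * ρ := by gcongr
    linarith
  have h := Convex.norm_image_sub_le_of_norm_hasFDerivWithin_le (𝕜 := ℝ)
    (fun x _ => (hfdiff x).hasFDerivAt.hasFDerivWithinAt) hb (convex_closedBall (0 : F) ρ)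
    (x := 0) (y := y) (by simpa using hρ) (by simpa using hy)
  rw [sub_zero] at h
  have h5 := (le_abs_self _).trans h
  have h6 : (‖f' 0‖ + β * ρ) * ‖y‖ ≤ (‖f' 0‖ + β * ρ) * ρ := by gcongr
  linarith

open Pointwise in
/-- Coercivity of `ψ + σ_{E^{-1}}` for the dual problem of the DLS method: under the
qualification condition, `E^{-1} = {(x₁, Ax₁) | x₁ ∈ -K^{-1}}` is bounded and
`μ ↦ ψ(μ) + σ_{E^{-1}}(μ)` is coercive, where
`ψ(μ₁,μ₂) = f*(μ₁) + ⟨μ₂, b⟩ + ι_Q(μ₂)` and `Q = Q₁ + Q₂`. -/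
theorem stmt15 {E₁ E₂ : Type*}
    [NormedAddCommGroup E₁] [InnerProductSpace ℝ E₁] [CompleteSpace E₁]
    [NormedAddCommGroup E₂] [InnerProductSpace ℝ E₂] [CompleteSpace E₂]
    (β : ℝ) (hβ : 0 < β)
    (f : E₁ → ℝ) (f' : E₁ → E₁) (hfconv : ConvexOn ℝ Set.univ f)
    (hfdiff : ∀ x, HasGradientAt f (f' x) x) (hflip : LipschitzWith β.toNNReal f')
    (A : E₁ →L[ℝ] E₂) (b : E₂)
    (Q₁ Q₂ : Set E₂)
    (hQ₁ne : Q₁.Nonempty) (hQ₁cl : IsClosed Q₁) (hQ₁conv : Convex ℝ Q₁)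
    (hQ₁bdd : Bornology.IsBounded Q₁)
    (hQ₂ne : Q₂.Nonempty) (hQ₂cl : IsClosed Q₂) (hQ₂conv : Convex ℝ Q₂)
    (hQ₂cone : ∀ c : ℝ, 0 < c → ∀ x ∈ Q₂, c • x ∈ Q₂)
    (Kinit : Set E₁) (hKcpt : IsCompact Kinit)
    (hqual : -b ∈ interior
      ({x₂ : E₂ | ∀ μ₂ ∈ Q₂, ⟪μ₂, x₂⟫ ≤ 0} - A '' closure (convexHull ℝ Kinit))) :
    Bornology.IsBounded ((fun x₁ : E₁ => (x₁, A x₁)) '' (-Kinit)) ∧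
    ECoercive (fun μ : E₁ × E₂ =>
      (if μ.2 ∈ Q₁ + Q₂ then fenchelR f μ.1 + ((⟪μ.2, b⟫ : ℝ) : EReal) else (⊤ : EReal)) +
      supportProd ((fun x₁ : E₁ => (x₁, A x₁)) '' (-Kinit)) μ) := by
  have hKb := hKcpt.isBounded
  refine ⟨?_, ?_⟩
  · have hc : Continuous (fun x₁ : E₁ => (x₁, A x₁)) := by fun_prop
    exact (hKcpt.neg.image hc).isBounded
  have hKne : Kinit.Nonempty := by
    rcases Set.eq_empty_or_nonempty Kinit with h | h
    · simp [h] at hqual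
    · exact h
  have hKKb : Bornology.IsBounded (closure (convexHull ℝ Kinit)) :=
    ((isBounded_convexHull).2 hKb).closure
  obtain ⟨R, hR⟩ := hKKb.exists_norm_le
  obtain ⟨q, hq⟩ := hQ₁bdd.exists_norm_le
  obtain ⟨C, hC⟩ := aux_bdd β hβ f f' hfdiff hflip (R + 1)
  rw [mem_interior_iff_mem_nhds, Metric.mem_nhds_iff] at hqual
  obtain ⟨ε, hε, hball⟩ := hqual
  have hR0 : 0 ≤ R := by
    obtain ⟨x, hx⟩ := hKne
    exact (norm_nonneg x).trans (hR x (subset_closure (subset_convexHull ℝ _ hx)))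
  have hq0 : 0 ≤ q := by
    obtain ⟨x, hx⟩ := hQ₁ne
    exact (norm_nonneg x).trans (hq x hx)
  -- lower bound for the support function
  have hsup : ∀ μ : E₁ × E₂, ∀ k ∈ closure (convexHull ℝ Kinit),
      ((-⟪μ.1, k⟫ - ⟪μ.2, A k⟫ : ℝ) : EReal) ≤
        supportProd ((fun x₁ : E₁ => (x₁, A x₁)) '' (-Kinit)) μ := by
    intro μ k hk
    have hLc : Continuous (fun x : E₁ => -⟪μ.1, x⟫ - ⟪μ.2, A x⟫) := by fun_prop
    obtain ⟨x₀, hx₀, hmax⟩ := hKcpt.exists_isMaxOn hKne hLc.continuousOn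
    have hle : -⟪μ.1, k⟫ - ⟪μ.2, A k⟫ ≤ -⟪μ.1, x₀⟫ - ⟪μ.2, A x₀⟫ := by
      have hcl : IsClosed {x : E₁ | -⟪μ.1, x⟫ - ⟪μ.2, A x⟫ ≤ -⟪μ.1, x₀⟫ - ⟪μ.2, A x₀⟫} :=
        isClosed_le hLc continuous_const
      have hcv : Convex ℝ {x : E₁ | -⟪μ.1, x⟫ - ⟪μ.2, A x⟫ ≤ -⟪μ.1, x₀⟫ - ⟪μ.2, A x₀⟫} := by
        apply convex_halfSpace_le
        constructor
        · intro x y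
          simp only [map_add, inner_add_right]
          ring
        · intro c x
          simp only [map_smul, real_inner_smul_right, smul_eq_mul]
          ring
      exact closure_minimal (convexHull_min (fun x hx => hmax hx) hcv) hcl hk
    refine (EReal.coe_le_coe_iff.2 hle).trans ?_
    have hm : (-x₀, A (-x₀)) ∈ (fun x₁ : E₁ => (x₁, A x₁)) '' (-Kinit) :=
      ⟨-x₀, by simpa using hx₀, rfl⟩
    have := le_iSup (fun x : ((fun x₁ : E₁ => (x₁, A x₁)) '' (-Kinit)) =>
      ((⟪μ.1, (x : E₁ × E₂).1⟫ + ⟪μ.2, (x : E₁ × E₂).2⟫ : ℝ) : EReal)) ⟨_, hm⟩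
    refine le_trans (le_of_eq ?_) this
    simp only [map_neg, inner_neg_right]
    rw [sub_eq_add_neg]
  set P : ℝ := ‖b‖ + ε / 2 + ‖A‖ * R with hP
  have hP0 : 0 ≤ P := by positivity
  set m : ℝ := min 1 (ε / 2) with hm
  have hm0 : 0 < m := by positivity
  intro M
  refine ⟨(M + C + q * P) / m, fun μ hμ => ?_⟩
  obtain ⟨u, hu, hμu⟩ := aux_unit (ε / 2) (by positivity) μ.2
  obtain ⟨v, hv, hμv⟩ := aux_unit 1 zero_le_one μ.1
  have hmem : -b + u ∈ Metric.ball (-b) ε := by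
    simp only [Metric.mem_ball, dist_self_add_left]
    linarith
  obtain ⟨p, hp, _, ⟨k, hk, rfl⟩, hpk⟩ := Set.mem_sub.1 (hball hmem)
  have hs := hsup μ k hk
  by_cases hQ : μ.2 ∈ Q₁ + Q₂
  · simp only [hQ, if_true]
    have hf : ((⟪μ.1, k + v⟫ - f (k + v) : ℝ) : EReal) ≤ fenchelR f μ.1 :=
      le_iSup (fun x : E₁ => ((⟪μ.1, x⟫ - f x : ℝ) : EReal)) (k + v)
    refine le_trans ?_ (add_le_add (add_le_add hf le_rfl) hs)
    rw [← EReal.coe_add, ← EReal.coe_add, EReal.coe_le_coe_iff]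
    obtain ⟨q₁, hq₁, q₂, hq₂, hqq⟩ := Set.mem_add.1 hQ
    have hpe : p = -b + u + A k := by rw [← hpk]; abel
    have hAk : ‖A k‖ ≤ ‖A‖ * R := (A.le_opNorm k).trans (by gcongr; exact hR k hk)
    have hpn : ‖p‖ ≤ P := by
      rw [hpe]
      have h1 := norm_add_le (-b + u) (A k)
      have h2 := norm_add_le (-b) u
      rw [norm_neg] at h2
      linarith
    have h1 : ⟪μ.2, p⟫ ≤ q * P := by
      rw [← hqq, inner_add_left]
      have h2 : ⟪q₂, p⟫ ≤ 0 := hp q₂ hq₂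
      have h3 : ⟪q₁, p⟫ ≤ q * P := (real_inner_le_norm q₁ p).trans (by
        gcongr
        exact hq q₁ hq₁)
      linarith
    have h4 : ⟪μ.2, p⟫ = -⟪μ.2, b⟫ + ⟪μ.2, u⟫ + ⟪μ.2, A k⟫ := by
      rw [hpe, inner_add_right, inner_add_right, inner_neg_right]
    have h5 : f (k + v) ≤ C := hC _ ((norm_add_le k v).trans (add_le_add (hR k hk) hv))
    have h6 : m * ‖μ‖ ≤ ‖μ.1‖ + ε / 2 * ‖μ.2‖ := by
      have ha : m * ‖μ.1‖ ≤ 1 * ‖μ.1‖ := by gcongr; exact min_le_left _ _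
      have hb : m * ‖μ.2‖ ≤ ε / 2 * ‖μ.2‖ := by gcongr; exact min_le_right _ _
      have hn1 := norm_nonneg μ.1
      have hn2 : 0 ≤ ε / 2 * ‖μ.2‖ := by positivity
      rcases max_choice ‖μ.1‖ ‖μ.2‖ with h | h
      · rw [Prod.norm_def, h]; linarith
      · rw [Prod.norm_def, h]; linarith
    have h7 : M + C + q * P ≤ m * ‖μ‖ := by
      rw [div_le_iff₀ hm0] at hμ
      linarith
    rw [inner_add_right]
    linarith
  · simp only [hQ, if_false]
    rw [EReal.top_add_of_ne_bot]
    · exact le_top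
    · intro h
      rw [h] at hs
      exact EReal.coe_ne_bot _ (le_bot_iff.1 hs)
end
end

section
/- Let E be a real Hilbert space, K ⊆ E a compact set, w ∈ E, and m a finite signed Borel measure on K such that −m is a nonnegative measure. Let 𝔈m ∈ E be the unique vector satisfying ⟨μ, 𝔈m⟩ = ∫_K ⟨μ, v⟩ dm(v) for all μ ∈ E. Then 1 − m(K) ≥ 1 > 0 and the vector (w − 𝔈m)/(1 − m(K)) belongs to the closed convex hull of {w} ∪ K. -/
open scoped Classical
open scoped RealInnerProductSpace

noncomputable section

variable {E : Type*} [NormedAddCommGroup E] [InnerProductSpace ℝ E]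

open MeasureTheory

/-- If `K` is compact, `m` is a finite signed Borel measure on `K` with `-m` nonnegative,
and `𝔈m` is the barycenter of `m`, then `1 - m(K) ≥ 1 > 0` and
`(w - 𝔈m)/(1 - m(K))` belongs to the closed convex hull of `{w} ∪ K`. -/
theorem stmt17 [CompleteSpace E] [MeasurableSpace E] [BorelSpace E]
    (K : Set E) (hK : IsCompact K) (w : E)
    (m : SignedMeasure K) (hm : ∀ A : Set K, m A ≤ 0)
    (Em : E)
    (hEm : ∀ μ : E, ⟪μ, Em⟫ =
      (∫ x : K, ⟪μ, (x : E)⟫ ∂m.toJordanDecomposition.posPart) -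
      (∫ x : K, ⟪μ, (x : E)⟫ ∂m.toJordanDecomposition.negPart)) :
    (1 : ℝ) ≤ 1 - m Set.univ ∧ (0 : ℝ) < 1 - m Set.univ ∧
    (1 - m Set.univ)⁻¹ • (w - Em) ∈ closure (convexHull ℝ ({w} ∪ K)) := by
  have : CompactSpace K := isCompact_iff_compactSpace.mp hK
  set ν := m.toJordanDecomposition.negPart with hν
  have hpos : m.toJordanDecomposition.posPart = 0 := by
    obtain ⟨i, hi₁, hi₂, hi₃, h1, h2⟩ := m.toJordanDecomposition_spec
    rw [h1, ← Measure.measure_univ_eq_zero,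
      SignedMeasure.toMeasureOfZeroLE_apply _ hi₂ hi₁ MeasurableSet.univ]
    have h := hm (i ∩ Set.univ)
    have h' : 0 ≤ m (i ∩ Set.univ) := by
      rw [Set.inter_univ]
      exact VectorMeasure.nonneg_of_zero_le_restrict _ hi₂
    rw [ENNReal.coe_eq_zero]
    apply NNReal.eq
    exact le_antisymm h h'
  have hmU : m Set.univ = - ν.real Set.univ := by
    rw [m.apply_eq_posPart_real_sub_negPart_real MeasurableSet.univ, hpos]
    simp [hν]
  have hint : Integrable (fun x : K => (x : E)) ν :=
    continuous_subtype_val.integrable_of_hasCompactSupport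
      (HasCompactSupport.of_compactSpace _)
  have hE : Em = - ∫ x : K, (x : E) ∂ν := by
    refine ext_inner_left ℝ fun μ => ?_
    rw [hEm μ, hpos, inner_neg_right, ← integral_inner hint]
    simp
  have ht : 0 ≤ ν.real Set.univ := measureReal_nonneg
  refine ⟨by linarith, by linarith, ?_⟩
  have hw : w ∈ closure (convexHull ℝ ({w} ∪ K)) :=
    subset_closure (subset_convexHull ℝ _ (by simp))
  rw [hmU, hE]
  by_cases h0 : ν = 0
  · rw [h0]; simpa using hw
  have : NeZero ν := ⟨h0⟩
  have hconv : Convex ℝ (closure (convexHull ℝ ({w} ∪ K))) := (convex_convexHull ℝ _).closure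
  have hav : (⨍ x : K, (x : E) ∂ν) ∈ closure (convexHull ℝ ({w} ∪ K)) :=
    hconv.average_mem isClosed_closure
      (Filter.Eventually.of_forall fun x =>
        subset_closure (subset_convexHull ℝ _ (Or.inr x.2))) hint
  have hs : ν.real Set.univ • (⨍ x : K, (x : E) ∂ν) = ∫ x : K, (x : E) ∂ν :=
    measure_smul_average _ _
  rw [← hs]
  set t := ν.real Set.univ
  have h1 : 0 < 1 + t := by linarith
  have := hconv hw hav (a := (1 + t)⁻¹) (b := (1 + t)⁻¹ * t) (by positivity) (by positivity)
    (by field_simp)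
  rw [mul_smul, ← smul_add] at this
  simpa using this
end
end
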